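/- Suppose ℙ(X ≠ 1) > 0. Let ν be a σ-ergodic measure satisfying property (G); if Q = Q_{h_ν(σ)} and h_X = h_ν(σ), suppose in addition that ν satisfies property (G̃). Then ν is Q-regular if and only if h_X < h_ν(σ). -/

import Mathlib

open MeasureTheory ProbabilityTheory Filter Set
open scoped ENNReal

noncomputable section

/-- The one-sided symbolic space over the alphabet `{0, …, b-1}`. -/
abbrev SymbSpace (b : ℕ) : Type := ℕ → Fin b

/-- The cylinder `[w]` of sequences starting with the finite word `w`. -/
def cylinder {b : ℕ} (w : List (Fin b)) : Set (SymbSpace b) :=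
  {x | ∀ i : Fin w.length, x i = w.get i}

/-- The prefix `x|_n` of `x` of length `n`, as a finite word. -/
def wordPrefix {b : ℕ} (x : SymbSpace b) (n : ℕ) : List (Fin b) :=
  List.ofFn (fun i : Fin n => x i)

/-- `Y_w = X_{w_1} X_{w_1w_2} ⋯ X_{w_1⋯w_n}`. -/
def cascadeY {b : ℕ} {Ω : Type*} (X : List (Fin b) → Ω → ℝ) (w : List (Fin b)) (ω : Ω) : ℝ :=
  ∏ k ∈ Finset.range w.length, X (w.take (k + 1)) ω

/-- The total mass `Z_n = ∑_{|u| = n} Y_u ν([u])`. -/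
def cascadeZ {b : ℕ} {Ω : Type*} (X : List (Fin b) → Ω → ℝ) (ν : Measure (SymbSpace b))
    (n : ℕ) (ω : Ω) : ℝ :=
  ∑ u : Fin n → Fin b, cascadeY X (List.ofFn u) ω * (ν (cylinder (List.ofFn u))).toReal

/-- `Z = limsup_n Z_n`. -/
def cascadeZlim {b : ℕ} {Ω : Type*} (X : List (Fin b) → Ω → ℝ) (ν : Measure (SymbSpace b))
    (ω : Ω) : ℝ :=
  Filter.limsup (fun n => cascadeZ X ν n ω) atTop

/-- Assumption (M1): the weights `X_u`, `u` a nonempty finite word, are i.i.d. with common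
law that of the nonnegative random variable `X₀` of expectation 1. -/
structure CascadeM1 {b : ℕ} {Ω : Type*} [MeasurableSpace Ω] (P : Measure Ω)
    (X : List (Fin b) → Ω → ℝ) (X₀ : Ω → ℝ) : Prop where
  meas : ∀ w, Measurable (X w)
  nonneg : ∀ w ω, 0 ≤ X w ω
  meas₀ : Measurable X₀
  nonneg₀ : ∀ ω, 0 ≤ X₀ ω
  mean₀ : ∫ ω, X₀ ω ∂P = 1
  indep : iIndepFun
    (fun w : {w : List (Fin b) // w ≠ []} => X w.1) P
  ident : ∀ w : List (Fin b), w ≠ [] → IdentDistrib (X w) X₀ P P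

/-- `h_X = E(X log X) ∈ [0, ∞]` (well defined since `x log x ≥ -e⁻¹` and, by convexity,
`E(X log X) ≥ E(X) log E(X) = 0`), encoded as an extended nonnegative real. -/
def entropyX {Ω : Type*} [MeasurableSpace Ω] (P : Measure Ω) (X₀ : Ω → ℝ) : ℝ≥0∞ :=
  (∫⁻ ω, ENNReal.ofReal (X₀ ω * Real.log (X₀ ω)) ∂P) -
    (∫⁻ ω, ENNReal.ofReal (-(X₀ ω * Real.log (X₀ ω))) ∂P)

/-- The lower local dimension `liminf_n (-log ν([x|_n]) / n)` of `ν` at `x`, valued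
in `[0, ∞]`. -/
def lowerLocalDim {b : ℕ} (ν : Measure (SymbSpace b)) (x : SymbSpace b) : ℝ≥0∞ :=
  Filter.liminf
    (fun n : ℕ => ENNReal.ofReal (-Real.log ((ν (cylinder (wordPrefix x n))).toReal) / n))
    atTop

/-- The upper local dimension `limsup_n (-log ν([x|_n]) / n)` of `ν` at `x`. -/
def upperLocalDim {b : ℕ} (ν : Measure (SymbSpace b)) (x : SymbSpace b) : ℝ≥0∞ :=
  Filter.limsup
    (fun n : ℕ => ENNReal.ofReal (-Real.log ((ν (cylinder (wordPrefix x n))).toReal) / n))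
    atTop

/-- The lower Hausdorff dimension of `ν`: the `ν`-essential infimum of the lower local
dimension. -/
def lowerHausdorffDim {b : ℕ} (ν : Measure (SymbSpace b)) : ℝ≥0∞ :=
  essInf (lowerLocalDim ν) ν

/-- The upper Hausdorff dimension of `ν`: the `ν`-essential supremum of the lower local
dimension. -/
def upperHausdorffDim {b : ℕ} (ν : Measure (SymbSpace b)) : ℝ≥0∞ :=
  essSup (lowerLocalDim ν) ν

/-- The upper packing dimension of `ν`: the `ν`-essential supremum of the upper local
dimension. -/
def upperPackingDim {b : ℕ} (ν : Measure (SymbSpace b)) : ℝ≥0∞ :=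
  essSup (upperLocalDim ν) ν


/-- The left shift on the one-sided symbolic space. -/
def shiftMap (b : ℕ) : SymbSpace b → SymbSpace b := fun x n => x (n + 1)

/-- The entropy sums `n⁻¹ ∑_{|u| = n} −ν([u]) log ν([u])`, whose limit is the
measure-theoretic entropy `h_ν(σ)`. -/
def entropySeq {b : ℕ} (ν : Measure (SymbSpace b)) (n : ℕ) : ℝ :=
  (n : ℝ)⁻¹ * ∑ u : Fin n → Fin b,
    -((ν (cylinder (List.ofFn u))).toReal * Real.log ((ν (cylinder (List.ofFn u))).toReal))

/-- Property (G): there are measurable functions `C ≥ 1` and `f`, finite `ν`-a.e., with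
`C(x)⁻¹ e^{∑_{k<n} f(σᵏx)} ≤ ν([x|_n]) ≤ C(x) e^{∑_{k<n} f(σᵏx)}` for `ν`-a.e. `x` and all
`n ≥ 1`. -/
def PropertyG {b : ℕ} (ν : Measure (SymbSpace b)) (f : SymbSpace b → ℝ) : Prop :=
  Measurable f ∧ ∃ C : SymbSpace b → ℝ, Measurable C ∧ (∀ᵐ x ∂ν, 1 ≤ C x) ∧
    (∀ᵐ x ∂ν, ∀ n : ℕ, 1 ≤ n →
      (C x)⁻¹ * Real.exp (∑ k ∈ Finset.range n, f ((shiftMap b)^[k] x)) ≤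
          (ν (cylinder (wordPrefix x n))).toReal ∧
        (ν (cylinder (wordPrefix x n))).toReal ≤
          C x * Real.exp (∑ k ∈ Finset.range n, f ((shiftMap b)^[k] x)))

/-- `ν` is the uniform measure `λ`, i.e. assigns mass `b^{-|u|}` to every cylinder `[u]`. -/
def IsUniformMeasure {b : ℕ} (ν : Measure (SymbSpace b)) : Prop :=
  ∀ w : List (Fin b), ν (cylinder w) = ((b : ℝ≥0∞))⁻¹ ^ w.length

/-- Property (G̃): `ν` satisfies (G) with potential `f`, and if `ν` is not the uniform
measure then `limsup_n ∑_{k<n} (f(σᵏx) + h_ν(σ)) = ∞` for `ν`-a.e. `x`. -/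
def PropertyGtilde {b : ℕ} (ν : Measure (SymbSpace b)) (f : SymbSpace b → ℝ) (hν : ℝ) :
    Prop :=
  PropertyG ν f ∧ (¬ IsUniformMeasure ν →
    ∀ᵐ x ∂ν, ∀ M : ℝ, ∃ᶠ n in atTop,
      M ≤ ∑ k ∈ Finset.range n, (f ((shiftMap b)^[k] x) + hν))

/-- `Q = Q_α`: the common law of the weights is `ℙ(X = e^α) = e^{-α}`,
`ℙ(X = 0) = 1 − e^{-α}`. -/
def IsQalphaCascade {Ω : Type*} [MeasurableSpace Ω] (P : Measure Ω) (X₀ : Ω → ℝ) (α : ℝ) :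
    Prop :=
  P {ω | X₀ ω = Real.exp α} = ENNReal.ofReal (Real.exp (-α)) ∧
    P {ω | X₀ ω = 0} = 1 - ENNReal.ofReal (Real.exp (-α))

/-!
Biasing `P` by `Z_n` amounts to drawing a spine `x` from `ν` and size-biasing the independent
weights met along it (the Peyrière measure). Everything is then decided by the spine mass
`Y_{x|n} ν([x|n])`, whose logarithm grows at the rate `h_X - h_ν`.

If `h_X < h_ν`, the law of large numbers for the size-biased weights and the lower bound in the
Shannon–McMillan–Breiman theorem make the spine mass decay exponentially, so that it is summable;
sorting the branches by the place where they leave the spine turns this into uniform integrability.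

Conversely, by Doob's maximal inequality uniform integrability makes the spine mass almost surely
bounded, which forces `h_X ≤ h_ν`. If `h_X = h_ν`, property (G) replaces `log ν([x|n])` by the
Birkhoff sums of `f`, and the supremum `M` of the resulting walk, which is bounded above and has
no drift, solves a cohomological equation `M = log ξ₀ + f + M ∘ shift` in which the size-biased
weight `ξ₀` is independent of the other terms on the right. Comparing characteristic functions
along the fibres shows that `log ξ₀` is constant, equal to its mean `h_ν`, that is, `Q = Q_{h_ν}`.
Either (G̃) now contradicts the boundedness of the spine mass, or `ν` is uniform and the words of
nonzero weight form a critical branching process, which dies out almost surely.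
-/

section ProductMeasures

theorem pi_withDensity {ι : Type*} [Fintype ι] {E : ι → Type*} [∀ i, MeasurableSpace (E i)]
    (μ : ∀ i, Measure (E i)) [∀ i, IsProbabilityMeasure (μ i)] {g : ∀ i, E i → ℝ≥0∞}
    (hg : ∀ i, Measurable (g i)) [∀ i, SigmaFinite ((μ i).withDensity (g i))] :
    Measure.pi (fun i => (μ i).withDensity (g i)) =
      (Measure.pi μ).withDensity fun x => ∏ i, g i (x i) := by
  refine Measure.pi_eq fun s hs => ?_
  have hprod (x : ∀ i, E i) : (univ.pi s).indicator (fun x => ∏ i, g i (x i)) x =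
      ∏ i, (s i).indicator (g i) (x i) := by
    by_cases hx : x ∈ univ.pi s
    · rw [indicator_of_mem hx]
      exact Finset.prod_congr rfl fun i _ => (indicator_of_mem (hx i (mem_univ i)) _).symm
    · obtain ⟨i, hi⟩ : ∃ i, x i ∉ s i := by simpa [Set.mem_pi] using hx
      rw [indicator_of_notMem hx,
        Finset.prod_eq_zero (Finset.mem_univ i) (indicator_of_notMem hi _)]
  rw [withDensity_apply _ (MeasurableSet.univ_pi hs),
    ← lintegral_indicator (MeasurableSet.univ_pi hs), lintegral_congr hprod,
    lintegral_prod_eq_prod_lintegral_of_indepFun Finset.univ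
      (fun i (x : ∀ i, E i) => (s i).indicator (g i) (x i))
      (iIndepFun_pi fun i => ((hg i).indicator (hs i)).aemeasurable)
      (fun i => ((hg i).indicator (hs i)).comp (measurable_pi_apply i))]
  refine Finset.prod_congr rfl fun i _ => ?_
  rw [(measurePreserving_eval μ i).lintegral_comp ((hg i).indicator (hs i)),
    lintegral_indicator (hs i), withDensity_apply _ (hs i)]

theorem lintegral_infinitePi_withDensity {ι : Type*} {E : ι → Type*}
    [∀ i, MeasurableSpace (E i)] (μ : ∀ i, Measure (E i))
    [∀ i, IsProbabilityMeasure (μ i)] {g : ∀ i, E i → ℝ≥0∞} (hg : ∀ i, Measurable (g i))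
    [∀ i, IsProbabilityMeasure ((μ i).withDensity (g i))] (s : Finset ι)
    {F : (∀ i, E i) → ℝ≥0∞} (hF : Measurable F) (hFs : DependsOn F s) :
    ∫⁻ x, F x ∂Measure.infinitePi (fun i => (μ i).withDensity (g i)) =
      ∫⁻ x, (∏ i ∈ s, g i (x i)) * F x ∂Measure.infinitePi μ := by
  classical
  have (i : ι) : Nonempty (E i) := nonempty_of_isProbabilityMeasure (μ i)
  let extend (y : ∀ i : s, E i) (i : ι) : E i :=
    if hi : i ∈ s then y ⟨i, hi⟩ else Classical.arbitrary _
  have hextend : Measurable extend := measurable_pi_lambda _ fun i => by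
    by_cases hi : i ∈ s
    · simpa only [extend, hi, dif_pos] using measurable_pi_apply (⟨i, hi⟩ : s)
    · simp only [extend, hi, dif_neg, not_false_eq_true, measurable_const]
  have hFr (x : ∀ i, E i) : F x = F (extend (s.restrict x)) :=
    hFs fun i hi => by simp [extend, Finset.mem_coe.1 hi]
  have hG : Measurable fun y : ∀ i : s, E i => ∏ i : s, g i (y i) :=
    Finset.measurable_fun_prod _ fun i _ => (hg i).comp (measurable_pi_apply i)
  have hFe : Measurable fun y => F (extend y) := hF.comp hextend
  calc ∫⁻ x, F x ∂Measure.infinitePi (fun i => (μ i).withDensity (g i))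
      = ∫⁻ y, F (extend y) ∂Measure.pi (fun i : s => (μ i).withDensity (g i)) := by
        rw [lintegral_congr hFr]
        exact lintegral_restrict_infinitePi _ hFe
    _ = ∫⁻ y, (∏ i : s, g i (y i)) * F (extend y) ∂Measure.pi (fun i : s => μ i) := by
        rw [pi_withDensity _ fun i : s => hg i, lintegral_withDensity_eq_lintegral_mul _ hG hFe]
        rfl
    _ = ∫⁻ x, (∏ i ∈ s, g i (x i)) * F x ∂Measure.infinitePi μ := by
        refine (lintegral_restrict_infinitePi μ (hG.mul hFe)).symm.trans
          (lintegral_congr fun x => ?_)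
        rw [hFr x, ← Finset.prod_coe_sort]
        rfl

end ProductMeasures

section Words

variable {b : ℕ}

lemma length_wordPrefix (x : SymbSpace b) (n : ℕ) : (wordPrefix x n).length = n :=
  List.length_ofFn

lemma wordPrefix_succ_ne_nil (x : SymbSpace b) (n : ℕ) : wordPrefix x (n + 1) ≠ [] := by
  simp [wordPrefix]

lemma take_wordPrefix (x : SymbSpace b) {k n : ℕ} (h : k ≤ n) :
    (wordPrefix x n).take k = wordPrefix x k :=
  List.ext_getElem (by simp [length_wordPrefix, h]) fun i _ _ => by simp [wordPrefix]

lemma mem_cylinder_iff {w : List (Fin b)} {x : SymbSpace b} :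
    x ∈ _root_.cylinder w ↔ wordPrefix x w.length = w :=
  ⟨fun h => List.ext_getElem (by simp [length_wordPrefix]) fun i _ hi => by
      simpa [wordPrefix] using h ⟨i, hi⟩,
    fun h i => by
      have := List.getElem_of_eq h (i := i) (by simp [length_wordPrefix])
      simpa [wordPrefix] using this⟩

lemma mem_cylinder_wordPrefix {x y : SymbSpace b} {n : ℕ} :
    y ∈ _root_.cylinder (wordPrefix x n) ↔ wordPrefix y n = wordPrefix x n := by
  rw [mem_cylinder_iff, length_wordPrefix]

lemma measurable_comp_wordPrefix_prod {α β : Type*} [MeasurableSpace α] [MeasurableSpace β]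
    (n : ℕ) {φ : List (Fin b) → α → β} (hφ : ∀ w, Measurable (φ w)) :
    Measurable fun q : SymbSpace b × α => φ (wordPrefix q.1 n) q.2 := by
  have hword : Measurable fun p : (Fin n → Fin b) × α => φ (List.ofFn p.1) p.2 :=
    measurable_from_prod_countable_right fun u => hφ (List.ofFn u)
  have hprefix : Measurable fun (x : SymbSpace b) (i : Fin n) => x i := by fun_prop
  exact hword.comp (hprefix.prodMap measurable_id)

lemma measurable_comp_wordPrefix {β : Type*} [MeasurableSpace β] (n : ℕ)
    (φ : List (Fin b) → β) : Measurable fun x : SymbSpace b => φ (wordPrefix x n) :=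
  (measurable_comp_wordPrefix_prod (α := Unit) n fun w => measurable_const (a := φ w)).comp
    (measurable_id.prodMk (measurable_const (a := ())))

lemma measurableSet_wordPrefix_eq (w : List (Fin b)) (n : ℕ) :
    MeasurableSet {x : SymbSpace b | wordPrefix x n = w} :=
  measurableSet_setOfPred.2 (measurable_comp_wordPrefix n fun v => v = w)

lemma measurableSet_cylinder (w : List (Fin b)) : MeasurableSet (_root_.cylinder w) := by
  convert measurableSet_wordPrefix_eq w w.length using 1
  exact Set.ext fun x => mem_cylinder_iff

lemma measure_preimage_ofFn (ν : Measure (SymbSpace b)) {n : ℕ} (u : Fin n → Fin b) :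
    ν ((fun x (i : Fin n) => x i) ⁻¹' {u}) = ν (_root_.cylinder (List.ofFn u)) := by
  congr 1
  ext x
  rw [mem_cylinder_iff, List.length_ofFn, wordPrefix, List.ofFn_inj]
  rfl

lemma lintegral_comp_wordPrefix (ν : Measure (SymbSpace b)) (n : ℕ)
    (φ : List (Fin b) → ℝ≥0∞) : ∫⁻ x, φ (wordPrefix x n) ∂ν =
      ∑ u : Fin n → Fin b, φ (List.ofFn u) * ν (_root_.cylinder (List.ofFn u)) := by
  have hprefix : Measurable fun (x : SymbSpace b) (i : Fin n) => x i := by fun_prop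
  calc ∫⁻ x, φ (wordPrefix x n) ∂ν
      = ∫⁻ u, φ (List.ofFn u) ∂ν.map fun x (i : Fin n) => x i :=
        (lintegral_map (f := fun u => φ (List.ofFn u)) (measurable_of_finite _) hprefix).symm
    _ = _ := by
        simp only [lintegral_fintype, Measure.map_apply hprefix (measurableSet_singleton _),
          measure_preimage_ofFn]

variable (ν : Measure (SymbSpace b)) [IsFiniteMeasure ν]

lemma integrable_comp_wordPrefix (n : ℕ) (φ : List (Fin b) → ℝ) :
    Integrable (fun x => φ (wordPrefix x n)) ν := by
  have hprefix : Measurable fun (x : SymbSpace b) (i : Fin n) => x i := by fun_prop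
  exact (Integrable.of_finite (μ := ν.map fun x (i : Fin n) => x i)
    (f := fun u => φ (List.ofFn u))).comp_measurable hprefix

lemma integral_comp_wordPrefix (n : ℕ) (φ : List (Fin b) → ℝ) :
    ∫ x, φ (wordPrefix x n) ∂ν =
      ∑ u : Fin n → Fin b, φ (List.ofFn u) * (ν (_root_.cylinder (List.ofFn u))).toReal := by
  have hprefix : Measurable fun (x : SymbSpace b) (i : Fin n) => x i := by fun_prop
  calc ∫ x, φ (wordPrefix x n) ∂ν
      = ∫ u, φ (List.ofFn u) ∂ν.map fun x (i : Fin n) => x i :=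
        (integral_map hprefix.aemeasurable
          (measurable_of_finite fun u => φ (List.ofFn u)).aestronglyMeasurable).symm
    _ = _ := by
        simp only [integral_fintype (μ := ν.map _) Integrable.of_finite, Measure.real,
          Measure.map_apply hprefix (measurableSet_singleton _), measure_preimage_ofFn,
          smul_eq_mul, mul_comm]

end Words

/-- The law with density `a ↦ max a 0` with respect to `ρ`. -/
def sizeBias (ρ : Measure ℝ) : Measure ℝ := ρ.withDensity ENNReal.ofReal

/-- The product of the first `n` terms of a sequence of weights. -/
def weightProd (n : ℕ) (ξ : ℕ → ℝ) : ℝ≥0∞ := ∏ k ∈ Finset.range n, ENNReal.ofReal (ξ k)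

lemma measurable_weightProd (n : ℕ) : Measurable (weightProd n) := by
  unfold weightProd; fun_prop

lemma dependsOn_weightProd (n : ℕ) : DependsOn (weightProd n) (Iio n) := fun _ _ h =>
  Finset.prod_congr rfl fun k hk => by rw [h k (Finset.mem_range.1 hk)]

section SpineMeasure

variable {b : ℕ} {Ω : Type*} [MeasurableSpace Ω] {P : Measure Ω}
  {X : List (Fin b) → Ω → ℝ} {X₀ : Ω → ℝ}

/-- The weights met along the spine `x`: the term of index `k` is the weight of the prefix of
length `k + 1`. -/
def spineWeights (X : List (Fin b) → Ω → ℝ) (x : SymbSpace b) (ω : Ω) (k : ℕ) : ℝ :=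
  X (wordPrefix x (k + 1)) ω

/-- The Peyrière measure: a spine drawn from `ν` together with the independent size-biased
weights found along it. -/
def peyriere (P : Measure Ω) (X₀ : Ω → ℝ) (ν : Measure (SymbSpace b)) :
    Measure (SymbSpace b × (ℕ → ℝ)) :=
  ν.prod (Measure.infinitePi fun _ => sizeBias (P.map X₀))

namespace CascadeM1

lemma isProbabilityMeasure (h : CascadeM1 P X X₀) : IsProbabilityMeasure P :=
  h.indep.isProbabilityMeasure

lemma isProbabilityMeasure_map (h : CascadeM1 P X X₀) : IsProbabilityMeasure (P.map X₀) :=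
  have := h.isProbabilityMeasure
  Measure.isProbabilityMeasure_map h.meas₀.aemeasurable

lemma integrable₀ (h : CascadeM1 P X X₀) : Integrable X₀ P :=
  .of_integral_ne_zero (by simp [h.mean₀])

lemma lintegral_ofReal₀ (h : CascadeM1 P X X₀) : ∫⁻ ω, ENNReal.ofReal (X₀ ω) ∂P = 1 := by
  rw [← ofReal_integral_eq_lintegral_ofReal h.integrable₀ (ae_of_all _ h.nonneg₀), h.mean₀,
    ENNReal.ofReal_one]

lemma isProbabilityMeasure_sizeBias (h : CascadeM1 P X X₀) :
    IsProbabilityMeasure (sizeBias (P.map X₀)) :=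
  ⟨by rw [sizeBias, withDensity_apply _ .univ, Measure.restrict_univ,
    lintegral_map ENNReal.measurable_ofReal h.meas₀, h.lintegral_ofReal₀]⟩

lemma isProbabilityMeasure_peyriere (h : CascadeM1 P X X₀) (ν : Measure (SymbSpace b))
    [IsProbabilityMeasure ν] : IsProbabilityMeasure (peyriere P X₀ ν) := by
  have := h.isProbabilityMeasure_sizeBias
  unfold peyriere
  infer_instance

lemma lintegral_ofReal_weight (h : CascadeM1 P X X₀) {w : List (Fin b)} (hw : w ≠ []) :
    ∫⁻ ω, ENNReal.ofReal (X w ω) ∂P = 1 := by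
  rw [← h.lintegral_ofReal₀]
  exact ((h.ident w hw).comp ENNReal.measurable_ofReal).lintegral_eq

lemma measurable_spineWeights_prod (h : CascadeM1 P X X₀) :
    Measurable fun q : SymbSpace b × Ω => spineWeights X q.1 q.2 :=
  measurable_pi_lambda _ fun k => measurable_comp_wordPrefix_prod (k + 1) h.meas

lemma measurable_spineWeights (h : CascadeM1 P X X₀) (x : SymbSpace b) :
    Measurable (spineWeights X x) :=
  h.measurable_spineWeights_prod.comp measurable_prodMk_left

lemma map_spineWeights (h : CascadeM1 P X X₀) (x : SymbSpace b) :
    P.map (spineWeights X x) = Measure.infinitePi fun _ => P.map X₀ := by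
  have := h.isProbabilityMeasure
  have hinj : Function.Injective fun k : ℕ =>
      (⟨wordPrefix x (k + 1), wordPrefix_succ_ne_nil x k⟩ : {w : List (Fin b) // w ≠ []}) :=
    fun k l hkl => by simpa [length_wordPrefix] using congrArg (fun w => w.1.length) hkl
  have hspine := (h.indep.precomp hinj).map_fun_eq_infinitePi_map fun k => h.meas _
  have hlaw (k : ℕ) : P.map (X (wordPrefix x (k + 1))) = P.map X₀ :=
    (h.ident _ (wordPrefix_succ_ne_nil x k)).map_eq
  simp only [hlaw] at hspine
  exact hspine

lemma lintegral_spineWeights_sizeBias (h : CascadeM1 P X X₀) (x : SymbSpace b) {n : ℕ}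
    {F : (ℕ → ℝ) → ℝ≥0∞} (hF : Measurable F) (hFn : DependsOn F (Iio n)) :
    ∫⁻ ξ, F ξ ∂Measure.infinitePi (fun _ => sizeBias (P.map X₀)) =
      ∫⁻ ω, weightProd n (spineWeights X x ω) * F (spineWeights X x ω) ∂P := by
  have := h.isProbabilityMeasure_map
  have : IsProbabilityMeasure ((P.map X₀).withDensity ENNReal.ofReal) :=
    h.isProbabilityMeasure_sizeBias
  have hmap := lintegral_map (μ := P) ((measurable_weightProd n).mul hF)
    (h.measurable_spineWeights x)
  rw [h.map_spineWeights x] at hmap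
  refine (lintegral_infinitePi_withDensity _ (fun _ => ENNReal.measurable_ofReal) (Finset.range n)
    hF ?_).trans hmap
  rwa [Finset.coe_range]

lemma lintegral_peyriere (h : CascadeM1 P X X₀) (ν : Measure (SymbSpace b)) {n : ℕ}
    {F : SymbSpace b × (ℕ → ℝ) → ℝ≥0∞} (hF : Measurable F)
    (hFn : ∀ x, DependsOn (fun ξ => F (x, ξ)) (Iio n)) :
    ∫⁻ q, F q ∂peyriere P X₀ ν = ∫⁻ x, ∫⁻ ω, weightProd n (spineWeights X x ω) *
      F (x, spineWeights X x ω) ∂P ∂ν := by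
  have := h.isProbabilityMeasure_sizeBias
  rw [peyriere, lintegral_prod _ hF.aemeasurable]
  exact lintegral_congr fun x =>
    h.lintegral_spineWeights_sizeBias x (hF.comp measurable_prodMk_left) (hFn x)

end CascadeM1

end SpineMeasure

section Independence

variable {b : ℕ} {Ω : Type*} {X : List (Fin b) → Ω → ℝ}

/-- The σ-algebra generated by the weights of the words in `S`. -/
abbrev weightSigma (X : List (Fin b) → Ω → ℝ) (S : Set {w : List (Fin b) // w ≠ []}) :
    MeasurableSpace Ω :=
  ⨆ w ∈ S, MeasurableSpace.comap (X w.1) inferInstance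

/-- The nonempty prefixes of `x` of length at most `n`. -/
def spineWords (x : SymbSpace b) (n : ℕ) : Set {w : List (Fin b) // w ≠ []} :=
  {w | w.1.length ≤ n ∧ w.1 = wordPrefix x w.1.length}

lemma wordPrefix_mem_spineWords (x : SymbSpace b) {k n : ℕ} (hk : k < n) :
    ⟨wordPrefix x (k + 1), wordPrefix_succ_ne_nil x k⟩ ∈ spineWords x n := by
  simpa [spineWords, length_wordPrefix] using hk

lemma weightSigma_mono {S T : Set {w : List (Fin b) // w ≠ []}} (hST : S ⊆ T) :
    weightSigma X S ≤ weightSigma X T :=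
  biSup_mono hST

lemma measurable_weightSigma {S : Set {w : List (Fin b) // w ≠ []}}
    {w : {w : List (Fin b) // w ≠ []}} (hw : w ∈ S) : Measurable[weightSigma X S] (X w.1) :=
  measurable_iff_comap_le.2 (le_biSup (fun w : {w : List (Fin b) // w ≠ []} =>
    MeasurableSpace.comap (X w.1) inferInstance) hw)

lemma measurable_weightSigma_comp_spineWeights {β : Type*} [MeasurableSpace β] (x : SymbSpace b)
    {n : ℕ} {F : (ℕ → ℝ) → β} (hF : Measurable F) (hFn : DependsOn F (Iio n)) :
    Measurable[weightSigma X (spineWords x n)] fun ω => F (spineWeights X x ω) := by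
  have htrunc (ω : Ω) :
      F (spineWeights X x ω) = F fun k => if k < n then spineWeights X x ω k else 0 :=
    hFn fun k hk => (if_pos hk).symm
  simp_rw [htrunc]
  refine hF.comp (@measurable_pi_lambda _ _ _ (weightSigma X _) _ _ fun k => ?_)
  by_cases hk : k < n
  · simp only [if_pos hk]
    exact measurable_weightSigma (wordPrefix_mem_spineWords x hk)
  · simp only [if_neg hk, measurable_const]

lemma spineWeights_apply_congr {x y : SymbSpace b} {n : ℕ} (hxy : wordPrefix x n = wordPrefix y n)
    (ω : Ω) {k : ℕ} (hk : k < n) : spineWeights X x ω k = spineWeights X y ω k := by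
  rw [spineWeights, spineWeights, ← take_wordPrefix x hk, ← take_wordPrefix y hk, hxy]

lemma cascadeY_append_singleton (X : List (Fin b) → Ω → ℝ) (w : List (Fin b)) (a : Fin b) (ω : Ω) :
    cascadeY X (w ++ [a]) ω = cascadeY X w ω * X (w ++ [a]) ω := by
  rw [cascadeY, cascadeY, List.length_append, List.length_singleton, Finset.prod_range_succ,
    List.take_of_length_le (by simp)]
  congr 1
  refine Finset.prod_congr rfl fun k hk => ?_
  rw [List.take_append_of_le_length (Finset.mem_range.1 hk)]

lemma measurable_weightSigma_cascadeY (X : List (Fin b) → Ω → ℝ) {w : List (Fin b)} {n : ℕ}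
    (hn : w.length ≤ n) : Measurable[weightSigma X {v | v.1.length ≤ n}] (cascadeY X w) := by
  refine Finset.measurable_fun_prod _ fun k hk => ?_
  have hk : k < w.length := Finset.mem_range.1 hk
  have hne : w.take (k + 1) ≠ [] := by
    rw [← List.length_pos_iff, List.length_take]
    lia
  exact measurable_weightSigma (w := ⟨_, hne⟩) ((List.length_take_le' _ _).trans hn)

lemma measurable_weightSigma_cascadeZ (X : List (Fin b) → Ω → ℝ) (ν : Measure (SymbSpace b))
    (n : ℕ) : Measurable[weightSigma X {w | w.1.length ≤ n}] (cascadeZ X ν n) :=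
  Finset.measurable_fun_sum _ fun u _ =>
    (measurable_weightSigma_cascadeY X (List.length_ofFn (f := u)).le).mul_const _

namespace CascadeM1

variable [MeasurableSpace Ω] {P : Measure Ω} {X₀ : Ω → ℝ}

lemma weightSigma_le (h : CascadeM1 P X X₀) (S : Set {w : List (Fin b) // w ≠ []}) :
    weightSigma X S ≤ ‹MeasurableSpace Ω› :=
  iSup₂_le fun _ _ => (h.meas _).comap_le

lemma indep_weightSigma (h : CascadeM1 P X X₀) {S T : Set {w : List (Fin b) // w ≠ []}}
    (hST : Disjoint S T) : Indep (weightSigma X S) (weightSigma X T) P :=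
  indep_iSup_of_disjoint (fun w : {w : List (Fin b) // w ≠ []} => (h.meas w).comap_le) h.indep hST

lemma lintegral_mul_ofReal_weight (h : CascadeM1 P X X₀) {S : Set {w : List (Fin b) // w ≠ []}}
    {w : {w : List (Fin b) // w ≠ []}} (hw : w ∉ S) {Φ : Ω → ℝ≥0∞}
    (hΦ : Measurable[weightSigma X S] Φ) :
    ∫⁻ ω, Φ ω * ENNReal.ofReal (X w ω) ∂P = ∫⁻ ω, Φ ω ∂P := by
  have hind := h.indep_weightSigma (disjoint_singleton_right.2 hw)
  have hmul := lintegral_mul_eq_lintegral_mul_lintegral_of_independent_measurableSpace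
    (h.weightSigma_le S) (h.weightSigma_le {w}) hind hΦ
    (ENNReal.measurable_ofReal.comp (measurable_weightSigma (mem_singleton w)))
  simpa only [Function.comp_apply, h.lintegral_ofReal_weight w.2, mul_one] using hmul

/-- Only the weights which the branch `y` shares with the spine `x` correlate with `Φ`; the
others have mean one. -/
lemma exists_lintegral_mul_weightProd_eq (h : CascadeM1 P X X₀) (x y : SymbSpace b) {n : ℕ}
    {Φ : Ω → ℝ≥0∞} (hΦ : Measurable[weightSigma X (spineWords x n)] Φ) (j : ℕ) :
    ∃ k ≤ j, y ∈ _root_.cylinder (wordPrefix x k) ∧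
      ∫⁻ ω, Φ ω * weightProd j (spineWeights X y ω) ∂P =
        ∫⁻ ω, Φ ω * weightProd k (spineWeights X x ω) ∂P := by
  simp only [mem_cylinder_wordPrefix]
  induction j with
  | zero => exact ⟨0, le_rfl, by simp [wordPrefix], by simp [weightProd]⟩
  | succ j ih =>
    by_cases hagree : wordPrefix y (j + 1) = wordPrefix x (j + 1)
    · refine ⟨j + 1, le_rfl, hagree, lintegral_congr fun ω => ?_⟩
      rw [dependsOn_weightProd (j + 1) fun k hk => spineWeights_apply_congr hagree ω hk]
    obtain ⟨k, hk, hxy, hint⟩ := ih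
    refine ⟨k, hk.trans j.le_succ, hxy, ?_⟩
    have hmeas : Measurable[weightSigma X (spineWords x n ∪ spineWords y j)]
        fun ω => Φ ω * weightProd j (spineWeights X y ω) :=
      (hΦ.mono (weightSigma_mono subset_union_left) le_rfl).mul
        ((measurable_weightSigma_comp_spineWeights y (measurable_weightProd j)
          (dependsOn_weightProd j)).mono (weightSigma_mono subset_union_right) le_rfl)
    have hnew : ⟨wordPrefix y (j + 1), wordPrefix_succ_ne_nil y j⟩ ∉
        spineWords x n ∪ spineWords y j := by
      simp [spineWords, length_wordPrefix, hagree]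
    rw [← hint, ← h.lintegral_mul_ofReal_weight hnew hmeas]
    refine lintegral_congr fun ω => ?_
    rw [weightProd, Finset.prod_range_succ, ← mul_assoc]
    rfl

end CascadeM1

end Independence

section TotalMass

variable {b : ℕ} {Ω : Type*} [MeasurableSpace Ω] {P : Measure Ω}
  {X : List (Fin b) → Ω → ℝ} {X₀ : Ω → ℝ} {ν : Measure (SymbSpace b)}

/-- The mass of the cylinder of generation `n` around `x`. -/
def cylMass (ν : Measure (SymbSpace b)) (n : ℕ) (x : SymbSpace b) : ℝ≥0∞ :=
  ν (_root_.cylinder (wordPrefix x n))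

/-- The mass `Y_w ν([w])` which the cascade gives to the prefix `w` of length `n` of the spine. -/
def spineMass (ν : Measure (SymbSpace b)) (n : ℕ) (q : SymbSpace b × (ℕ → ℝ)) : ℝ≥0∞ :=
  weightProd n q.2 * cylMass ν n q.1

lemma measurable_spineMass (ν : Measure (SymbSpace b)) (n : ℕ) : Measurable (spineMass ν n) :=
  ((measurable_weightProd n).comp measurable_snd).mul
    ((measurable_comp_wordPrefix n fun w => ν (_root_.cylinder w)).comp measurable_fst)

lemma dependsOn_spineMass (ν : Measure (SymbSpace b)) {k n : ℕ} (hkn : k ≤ n) (x : SymbSpace b) :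
    DependsOn (fun ξ => spineMass ν k (x, ξ)) (Iio n) := fun ξ ξ' h => by
  simp only [spineMass, (dependsOn_weightProd k).mono (Iio_subset_Iio hkn) h]

/-- The total mass along the first `n` generations of the spine. -/
def spineMassSum (ν : Measure (SymbSpace b)) (n : ℕ) (q : SymbSpace b × (ℕ → ℝ)) : ℝ≥0∞ :=
  ∑ k ∈ Finset.range (n + 1), spineMass ν k q

lemma measurable_spineMassSum (ν : Measure (SymbSpace b)) (n : ℕ) :
    Measurable (spineMassSum ν n) :=
  Finset.measurable_fun_sum _ fun k _ => measurable_spineMass ν k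

lemma dependsOn_spineMassSum (ν : Measure (SymbSpace b)) (n : ℕ) (x : SymbSpace b) :
    DependsOn (fun ξ => spineMassSum ν n (x, ξ)) (Iio n) := fun _ _ h =>
  Finset.sum_congr rfl fun _ hk => dependsOn_spineMass ν (Finset.mem_range_succ_iff.1 hk) x h

namespace CascadeM1

lemma measurable_cascadeZ (h : CascadeM1 P X X₀) (ν : Measure (SymbSpace b)) (n : ℕ) :
    Measurable (cascadeZ X ν n) := by
  unfold cascadeZ cascadeY
  have := h.meas
  fun_prop

lemma cascadeY_nonneg (h : CascadeM1 P X X₀) (w : List (Fin b)) (ω : Ω) : 0 ≤ cascadeY X w ω :=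
  Finset.prod_nonneg fun _ _ => h.nonneg _ _

lemma cascadeZ_nonneg (h : CascadeM1 P X X₀) (ν : Measure (SymbSpace b)) (n : ℕ) (ω : Ω) :
    0 ≤ cascadeZ X ν n ω :=
  Finset.sum_nonneg fun _ _ => mul_nonneg (h.cascadeY_nonneg _ ω) ENNReal.toReal_nonneg

lemma ofReal_cascadeY_wordPrefix (h : CascadeM1 P X X₀) (x : SymbSpace b) (n : ℕ) (ω : Ω) :
    ENNReal.ofReal (cascadeY X (wordPrefix x n) ω) = weightProd n (spineWeights X x ω) := by
  rw [cascadeY, length_wordPrefix, ENNReal.ofReal_prod_of_nonneg fun _ _ => h.nonneg _ _]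
  refine Finset.prod_congr rfl fun k hk => ?_
  rw [take_wordPrefix x (Finset.mem_range.1 hk), spineWeights]

lemma ofReal_cascadeZ [IsFiniteMeasure ν] (h : CascadeM1 P X X₀) (n : ℕ) (ω : Ω) :
    ENNReal.ofReal (cascadeZ X ν n ω) = ∫⁻ x, weightProd n (spineWeights X x ω) ∂ν := by
  simp only [← h.ofReal_cascadeY_wordPrefix]
  rw [lintegral_comp_wordPrefix ν n fun w => ENNReal.ofReal (cascadeY X w ω), cascadeZ,
    ENNReal.ofReal_sum_of_nonneg fun _ _ =>
      mul_nonneg (h.cascadeY_nonneg _ ω) ENNReal.toReal_nonneg]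
  refine Finset.sum_congr rfl fun u _ => ?_
  rw [ENNReal.ofReal_mul (h.cascadeY_nonneg _ ω), ENNReal.ofReal_toReal (measure_ne_top _ _)]

lemma measurable_weightProd_spineWeights_prod (h : CascadeM1 P X X₀) (n : ℕ) :
    Measurable fun q : SymbSpace b × Ω => weightProd n (spineWeights X q.1 q.2) :=
  (measurable_weightProd n).comp h.measurable_spineWeights_prod

lemma lintegral_mul_ofReal_cascadeZ [IsFiniteMeasure ν] (h : CascadeM1 P X X₀) (n : ℕ)
    {Φ : Ω → ℝ≥0∞} (hΦ : Measurable Φ) :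
    ∫⁻ ω, Φ ω * ENNReal.ofReal (cascadeZ X ν n ω) ∂P =
      ∫⁻ x, ∫⁻ ω, Φ ω * weightProd n (spineWeights X x ω) ∂P ∂ν := by
  have := h.isProbabilityMeasure
  have hprod := h.measurable_weightProd_spineWeights_prod n
  rw [lintegral_lintegral_swap (((hΦ.comp measurable_snd).mul hprod).aemeasurable)]
  refine lintegral_congr fun ω => ?_
  rw [h.ofReal_cascadeZ]
  exact (lintegral_const_mul _ (hprod.comp measurable_prodMk_right)).symm

lemma spineMass_le_ofReal_cascadeZ [IsFiniteMeasure ν] (h : CascadeM1 P X X₀) (n : ℕ)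
    (x : SymbSpace b) (ω : Ω) :
    spineMass ν n (x, spineWeights X x ω) ≤ ENNReal.ofReal (cascadeZ X ν n ω) := by
  have hcyl := measurableSet_cylinder (wordPrefix x n)
  rw [h.ofReal_cascadeZ, spineMass, cylMass, ← lintegral_indicator_const hcyl]
  refine lintegral_mono (indicator_le fun y hy => ?_)
  rw [dependsOn_weightProd n fun k hk =>
    spineWeights_apply_congr (mem_cylinder_wordPrefix.1 hy).symm ω hk]

lemma lintegral_mul_ofReal_cascadeZ_le [IsFiniteMeasure ν] (h : CascadeM1 P X X₀)
    (x : SymbSpace b) (n : ℕ) {Φ : Ω → ℝ≥0∞}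
    (hΦ : Measurable[weightSigma X (spineWords x n)] Φ) :
    ∫⁻ ω, Φ ω * ENNReal.ofReal (cascadeZ X ν n ω) ∂P ≤
      ∫⁻ ω, Φ ω * spineMassSum ν n (x, spineWeights X x ω) ∂P := by
  have hΦm : Measurable Φ := hΦ.mono (h.weightSigma_le _) le_rfl
  have hΦk (k : ℕ) : Measurable fun ω => Φ ω * weightProd k (spineWeights X x ω) :=
    hΦm.mul ((measurable_weightProd k).comp (h.measurable_spineWeights x))
  let c (k : ℕ) : ℝ≥0∞ := ∫⁻ ω, Φ ω * weightProd k (spineWeights X x ω) ∂P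
  calc ∫⁻ ω, Φ ω * ENNReal.ofReal (cascadeZ X ν n ω) ∂P
      = ∫⁻ y, ∫⁻ ω, Φ ω * weightProd n (spineWeights X y ω) ∂P ∂ν :=
        h.lintegral_mul_ofReal_cascadeZ n hΦm
    _ ≤ ∫⁻ y, ∑ k ∈ Finset.range (n + 1),
          (_root_.cylinder (wordPrefix x k)).indicator (fun _ => c k) y ∂ν := by
        refine lintegral_mono fun y => ?_
        obtain ⟨k, hk, hy, hint⟩ := h.exists_lintegral_mul_weightProd_eq x y hΦ n
        rw [hint]
        refine (indicator_of_mem hy (fun _ => c k)).symm.le.trans ?_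
        exact Finset.single_le_sum (f := fun k =>
          (_root_.cylinder (wordPrefix x k)).indicator (fun _ => c k) y) (fun _ _ => zero_le)
          (Finset.mem_range_succ_iff.2 hk)
    _ = ∑ k ∈ Finset.range (n + 1), c k * cylMass ν k x := by
        rw [lintegral_finsetSum _ fun k _ => measurable_const.indicator (measurableSet_cylinder _)]
        exact Finset.sum_congr rfl fun k _ => lintegral_indicator_const (measurableSet_cylinder _) _
    _ = ∫⁻ ω, Φ ω * spineMassSum ν n (x, spineWeights X x ω) ∂P := by
        simp only [c, Finset.mul_sum, spineMassSum, spineMass, ← mul_assoc]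
        rw [lintegral_finsetSum _ fun k _ => (hΦk k).mul_const _]
        exact Finset.sum_congr rfl fun k _ => (lintegral_mul_const _ (hΦk k)).symm

/-- The size-biased first moment of `Z_n`, by decomposition along the spine. -/
lemma lintegral_weightProd_mul_cascadeZ_le [IsFiniteMeasure ν] (h : CascadeM1 P X X₀) (n : ℕ)
    {F : SymbSpace b × (ℕ → ℝ) → ℝ≥0∞} (hF : Measurable F)
    (hFn : ∀ x, DependsOn (fun ξ => F (x, ξ)) (Iio n)) :
    ∫⁻ x, ∫⁻ ω, weightProd n (spineWeights X x ω) * F (x, spineWeights X x ω) *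
        ENNReal.ofReal (cascadeZ X ν n ω) ∂P ∂ν ≤
      ∫⁻ q, F q * spineMassSum ν n q ∂peyriere P X₀ ν := by
  rw [h.lintegral_peyriere ν (n := n) (F := fun q => F q * spineMassSum ν n q)
    (hF.mul (measurable_spineMassSum ν n)) fun x ξ ξ' hξ =>
      congr_arg₂ (· * ·) (hFn x hξ) (dependsOn_spineMassSum ν n x hξ)]
  refine lintegral_mono fun x => ?_
  simp only [← mul_assoc]
  refine h.lintegral_mul_ofReal_cascadeZ_le x n (measurable_weightSigma_comp_spineWeights x
    (F := fun ξ => weightProd n ξ * F (x, ξ))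
    ((measurable_weightProd n).mul (hF.comp measurable_prodMk_left)) fun ξ ξ' hξ => ?_)
  exact congr_arg₂ (· * ·) (dependsOn_weightProd n hξ) (hFn x hξ)

end CascadeM1

end TotalMass

lemma indicator_one_le_indicator_one {α β : Type*} {s : Set α} {t : Set β} {a : α} {b : β}
    (hst : a ∈ s → b ∈ t) : s.indicator (1 : α → ℝ≥0∞) a ≤ t.indicator 1 b := by
  by_cases ha : a ∈ s
  · simp [ha, hst ha]
  · simp [ha]

section Regularity

variable {b : ℕ} {Ω : Type*} [MeasurableSpace Ω] {P : Measure Ω}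
  {X : List (Fin b) → Ω → ℝ} {X₀ : Ω → ℝ} {ν : Measure (SymbSpace b)}

namespace CascadeM1

lemma eLpNorm_indicator_cascadeZ (h : CascadeM1 P X X₀) (n : ℕ) {s : Set Ω}
    (hs : MeasurableSet s) : eLpNorm (s.indicator (cascadeZ X ν n)) 1 P =
      ∫⁻ ω, s.indicator 1 ω * ENNReal.ofReal (cascadeZ X ν n ω) ∂P := by
  rw [eLpNorm_indicator_eq_eLpNorm_restrict hs, eLpNorm_one_eq_lintegral_enorm,
    ← lintegral_indicator hs]
  refine lintegral_congr fun ω => ?_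
  by_cases hω : ω ∈ s <;> simp [hω, Real.enorm_eq_ofReal (h.cascadeZ_nonneg ν n ω)]

lemma peyriere_eq_lintegral (h : CascadeM1 P X X₀) (ν : Measure (SymbSpace b)) {n : ℕ}
    {B : Set (SymbSpace b × (ℕ → ℝ))} (hB : MeasurableSet B)
    (hBn : ∀ x, DependsOn (fun ξ => (x, ξ) ∈ B) (Iio n)) :
    peyriere P X₀ ν B = ∫⁻ x, ∫⁻ ω, weightProd n (spineWeights X x ω) *
      B.indicator 1 (x, spineWeights X x ω) ∂P ∂ν := by
  rw [← lintegral_indicator_one hB]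
  refine h.lintegral_peyriere ν (measurable_one.indicator hB) fun x ξ ξ' hξ => ?_
  exact indicator_eq_indicator (iff_of_eq (hBn x hξ)) rfl

lemma lintegral_size_biased_add_le [IsFiniteMeasure ν] (h : CascadeM1 P X X₀) (n : ℕ)
    {K c : ℝ≥0∞} (hc : c ≠ ∞) {B : Set (SymbSpace b × (ℕ → ℝ))}
    (hBdef : B = {q | K < spineMassSum ν n q}) :
    ∫⁻ x, ∫⁻ ω, weightProd n (spineWeights X x ω) * B.indicator 1 (x, spineWeights X x ω) +
        c * (weightProd n (spineWeights X x ω) * Bᶜ.indicator 1 (x, spineWeights X x ω) *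
          ENNReal.ofReal (cascadeZ X ν n ω)) ∂P ∂ν ≤
      peyriere P X₀ ν B + c * (K * peyriere P X₀ ν univ) := by
  have hB : MeasurableSet B :=
    hBdef ▸ measurableSet_lt measurable_const (measurable_spineMassSum ν n)
  have hBn (x : SymbSpace b) : DependsOn (fun ξ => (x, ξ) ∈ B) (Iio n) := fun ξ ξ' hξ => by
    have := dependsOn_spineMassSum ν n x hξ
    simp only [hBdef, mem_ofPred_eq, this]
  have hwB : Measurable fun q : SymbSpace b × Ω => weightProd n (spineWeights X q.1 q.2) *
      B.indicator 1 (q.1, spineWeights X q.1 q.2) :=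
    (h.measurable_weightProd_spineWeights_prod n).mul
      ((measurable_one.indicator hB).comp (measurable_fst.prodMk h.measurable_spineWeights_prod))
  have := h.isProbabilityMeasure
  have hsplit (x : SymbSpace b) := lintegral_add_left (μ := P)
    (hwB.comp (measurable_prodMk_left (x := x))) fun ω =>
      c * (weightProd n (spineWeights X x ω) * Bᶜ.indicator 1 (x, spineWeights X x ω) *
        ENNReal.ofReal (cascadeZ X ν n ω))
  simp only [Function.comp_apply] at hsplit
  simp only [hsplit, lintegral_const_mul' _ _ hc]
  rw [lintegral_add_left hwB.lintegral_prod_right', lintegral_const_mul' _ _ hc,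
    ← h.peyriere_eq_lintegral ν hB hBn]
  gcongr
  refine (h.lintegral_weightProd_mul_cascadeZ_le n (measurable_one.indicator hB.compl)
    fun x ξ ξ' hξ => indicator_eq_indicator (not_congr (iff_of_eq (hBn x hξ))) rfl).trans ?_
  rw [← lintegral_const]
  refine lintegral_mono fun q => ?_
  by_cases hq : q ∈ B
  · simp [hq]
  · have hqK : spineMassSum ν n q ≤ K := by simpa [hBdef] using hq
    simpa [hq] using hqK

/-- The mass on `{L ≤ Z_n}` is either carried by spines with a large mass sum, or bounded by the
size-biased first moment of `Z_n / L` over the other spines. -/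
lemma lintegral_indicator_mul_cascadeZ_le [IsFiniteMeasure ν] (h : CascadeM1 P X X₀) (n : ℕ)
    {K L : ℝ≥0∞} (hL : L ≠ 0) (hL' : L ≠ ∞) :
    ∫⁻ ω, {ω | L ≤ ENNReal.ofReal (cascadeZ X ν n ω)}.indicator 1 ω *
        ENNReal.ofReal (cascadeZ X ν n ω) ∂P ≤
      peyriere P X₀ ν {q | K < spineMassSum ν n q} + L⁻¹ * (K * peyriere P X₀ ν univ) := by
  let A : Set Ω := {ω | L ≤ ENNReal.ofReal (cascadeZ X ν n ω)}
  let B : Set (SymbSpace b × (ℕ → ℝ)) := {q | K < spineMassSum ν n q}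
  have hA : MeasurableSet A :=
    measurableSet_le measurable_const (h.measurable_cascadeZ ν n).ennreal_ofReal
  have hcut (ω : Ω) (q : SymbSpace b × (ℕ → ℝ)) : A.indicator (1 : Ω → ℝ≥0∞) ω ≤
      B.indicator 1 q + L⁻¹ * (Bᶜ.indicator 1 q * ENNReal.ofReal (cascadeZ X ν n ω)) := by
    by_cases hω : L ≤ ENNReal.ofReal (cascadeZ X ν n ω)
    · by_cases hq : q ∈ B
      · simp [A, hω, hq]
      · simpa [A, hω, hq, ENNReal.inv_mul_cancel hL hL'] using mul_le_mul_right hω L⁻¹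
    · simp [A, hω]
  rw [h.lintegral_mul_ofReal_cascadeZ n (measurable_one.indicator hA)]
  refine le_trans (lintegral_mono fun x => lintegral_mono fun ω => ?_)
    (h.lintegral_size_biased_add_le n (ENNReal.inv_ne_top.2 hL) rfl)
  refine (mul_le_mul_left (hcut ω (x, spineWeights X x ω)) _).trans_eq ?_
  ring

lemma tendsto_peyriere_lt_tsum_spineMass [IsProbabilityMeasure ν] (h : CascadeM1 P X X₀)
    (hsum : ∀ᵐ q ∂peyriere P X₀ ν, ∑' k, spineMass ν k q < ∞) :
    Tendsto (fun K : ℕ => peyriere P X₀ ν {q | (K : ℝ≥0∞) < ∑' k, spineMass ν k q}) atTop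
      (nhds 0) := by
  have := h.isProbabilityMeasure_peyriere ν
  have hlim := tendsto_measure_iInter_atTop (μ := peyriere P X₀ ν)
    (s := fun K : ℕ => {q | (K : ℝ≥0∞) < ∑' k, spineMass ν k q})
    (fun K => (measurableSet_lt measurable_const
      (Measurable.tsum (measurable_spineMass ν))).nullMeasurableSet)
    (fun K K' hK q hq => lt_of_le_of_lt (Nat.cast_le.2 hK)
      (show (K' : ℝ≥0∞) < ∑' k, spineMass ν k q from hq)) ⟨0, measure_ne_top _ _⟩
  have hzero : peyriere P X₀ ν (⋂ K : ℕ, {q | (K : ℝ≥0∞) < ∑' k, spineMass ν k q}) = 0 := by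
    rw [measure_eq_zero_iff_ae_notMem]
    filter_upwards [hsum] with q hfin hq
    obtain ⟨K, hK⟩ := ENNReal.exists_nat_gt hfin.ne
    exact (mem_iInter.1 hq K).not_gt hK
  rwa [hzero] at hlim

theorem uniformIntegrable_of_tsum_spineMass_lt_top [IsProbabilityMeasure ν]
    (h : CascadeM1 P X X₀) (hsum : ∀ᵐ q ∂peyriere P X₀ ν, ∑' k, spineMass ν k q < ∞) :
    UniformIntegrable (cascadeZ X ν) 1 P := by
  have := h.isProbabilityMeasure
  have := h.isProbabilityMeasure_peyriere ν
  refine uniformIntegrable_of le_rfl ENNReal.one_ne_top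
    (fun n => (h.measurable_cascadeZ ν n).aestronglyMeasurable) fun ε hε => ?_
  obtain ⟨K, hK⟩ := ((h.tendsto_peyriere_lt_tsum_spineMass hsum).eventually_le_const
    (ENNReal.ofReal_pos.2 (half_pos hε) : 0 < ENNReal.ofReal (ε / 2))).exists
  obtain ⟨L, hL, hLK⟩ : ∃ L : NNReal, L ≠ 0 ∧
      (L : ℝ≥0∞)⁻¹ * K ≤ ENNReal.ofReal (ε / 2) := by
    refine ⟨Real.toNNReal (2 * (K + 1) / ε), (Real.toNNReal_pos.2 (by positivity)).ne', ?_⟩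
    rw [← ENNReal.ofReal_natCast, ← ENNReal.ofReal, ← ENNReal.ofReal_inv_of_pos (by positivity),
      ← ENNReal.ofReal_mul (by positivity)]
    refine ENNReal.ofReal_le_ofReal ?_
    field_simp
    linarith
  refine ⟨L, fun n => ?_⟩
  have hset : {ω | L ≤ ‖cascadeZ X ν n ω‖₊} =
      {ω | (L : ℝ≥0∞) ≤ ENNReal.ofReal (cascadeZ X ν n ω)} := by
    ext ω
    rw [mem_ofPred_eq, mem_ofPred_eq, ← ENNReal.coe_le_coe, ← enorm_eq_nnnorm,
      Real.enorm_eq_ofReal (h.cascadeZ_nonneg ν n ω)]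
  rw [hset, h.eLpNorm_indicator_cascadeZ n
    (measurableSet_le measurable_const (h.measurable_cascadeZ ν n).ennreal_ofReal)]
  calc _ ≤ peyriere P X₀ ν {q | (K : ℝ≥0∞) < spineMassSum ν n q} +
        (L : ℝ≥0∞)⁻¹ * (K * peyriere P X₀ ν univ) :=
        h.lintegral_indicator_mul_cascadeZ_le n (by simpa using hL) ENNReal.coe_ne_top
    _ ≤ ENNReal.ofReal (ε / 2) + ENNReal.ofReal (ε / 2) := by
        refine add_le_add ((measure_mono fun q hq => ?_).trans hK) (by simpa using hLK)
        exact lt_of_lt_of_le hq (ENNReal.sum_le_tsum _)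
    _ = ENNReal.ofReal ε := by
        rw [← ENNReal.ofReal_add (by positivity) (by positivity), add_halves]

end CascadeM1

end Regularity

section Martingale

variable {b : ℕ} {Ω : Type*} [mΩ : MeasurableSpace Ω] {P : Measure Ω}
  {X : List (Fin b) → Ω → ℝ} {X₀ : Ω → ℝ} {ν : Measure (SymbSpace b)}

/-- The filtration of the cascade: at time `n` the weights of the words of length at most `n` are
known. -/
def CascadeM1.filtration (h : CascadeM1 P X X₀) : Filtration ℕ mΩ where
  seq n := weightSigma X {w | w.1.length ≤ n}
  mono' _ _ hmn := weightSigma_mono fun _ hw => le_trans hw hmn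
  le' _ := h.weightSigma_le _

namespace CascadeM1

lemma lintegral_mul_ofReal_cascadeZ_succ [IsFiniteMeasure ν] (h : CascadeM1 P X X₀) (n : ℕ)
    {Φ : Ω → ℝ≥0∞} (hΦ : Measurable[h.filtration n] Φ) :
    ∫⁻ ω, Φ ω * ENNReal.ofReal (cascadeZ X ν (n + 1) ω) ∂P =
      ∫⁻ ω, Φ ω * ENNReal.ofReal (cascadeZ X ν n ω) ∂P := by
  have hΦm : Measurable Φ := hΦ.mono (h.weightSigma_le _) le_rfl
  rw [h.lintegral_mul_ofReal_cascadeZ _ hΦm, h.lintegral_mul_ofReal_cascadeZ _ hΦm]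
  refine lintegral_congr fun x => ?_
  have hnew : ⟨wordPrefix x (n + 1), wordPrefix_succ_ne_nil x n⟩ ∉
      {w : {w : List (Fin b) // w ≠ []} | w.1.length ≤ n} := by
    simp [length_wordPrefix]
  have hpast : Measurable[h.filtration n] fun ω => Φ ω * weightProd n (spineWeights X x ω) :=
    hΦ.mul ((measurable_weightSigma_comp_spineWeights x (measurable_weightProd n)
      (dependsOn_weightProd n)).mono (weightSigma_mono fun _ hw => hw.1) le_rfl)
  rw [← h.lintegral_mul_ofReal_weight hnew hpast]
  refine lintegral_congr fun ω => ?_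
  rw [weightProd, Finset.prod_range_succ, ← mul_assoc]
  rfl

lemma lintegral_ofReal_cascadeZ [IsFiniteMeasure ν] (h : CascadeM1 P X X₀) (n : ℕ) :
    ∫⁻ ω, ENNReal.ofReal (cascadeZ X ν n ω) ∂P = ν univ := by
  have := h.isProbabilityMeasure
  induction n with
  | zero => simp [h.ofReal_cascadeZ, weightProd]
  | succ n ih =>
    simpa [ih] using h.lintegral_mul_ofReal_cascadeZ_succ (ν := ν) n (Φ := 1)
      (@measurable_one _ _ _ (h.filtration n) _)

lemma integrable_cascadeZ [IsFiniteMeasure ν] (h : CascadeM1 P X X₀) (n : ℕ) :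
    Integrable (cascadeZ X ν n) P := by
  refine ⟨(h.measurable_cascadeZ ν n).aestronglyMeasurable, ?_⟩
  rw [hasFiniteIntegral_iff_ofReal (ae_of_all _ (h.cascadeZ_nonneg ν n)),
    h.lintegral_ofReal_cascadeZ]
  exact measure_lt_top _ _

lemma ofReal_setIntegral_cascadeZ [IsFiniteMeasure ν] (h : CascadeM1 P X X₀) (n : ℕ) {s : Set Ω}
    (hs : MeasurableSet s) : ENNReal.ofReal (∫ ω in s, cascadeZ X ν n ω ∂P) =
      ∫⁻ ω, s.indicator 1 ω * ENNReal.ofReal (cascadeZ X ν n ω) ∂P := by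
  rw [← h.eLpNorm_indicator_cascadeZ n hs, eLpNorm_indicator_eq_eLpNorm_restrict hs,
    ofReal_integral_eq_lintegral_ofReal (h.integrable_cascadeZ n).integrableOn
      (ae_of_all _ (h.cascadeZ_nonneg ν n)), eLpNorm_one_eq_lintegral_enorm]
  exact lintegral_congr fun ω => (Real.enorm_eq_ofReal (h.cascadeZ_nonneg ν n ω)).symm

theorem martingale_cascadeZ [IsFiniteMeasure ν] (h : CascadeM1 P X X₀) :
    Martingale (cascadeZ X ν) h.filtration P := by
  have := h.isProbabilityMeasure
  refine martingale_nat (fun n => (measurable_weightSigma_cascadeZ X ν n).stronglyMeasurable)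
    h.integrable_cascadeZ fun n => ae_eq_condExp_of_forall_setIntegral_eq (h.filtration.le n)
      (h.integrable_cascadeZ _) (fun _ _ _ => (h.integrable_cascadeZ n).integrableOn)
      (fun s hs _ => ?_)
      (measurable_weightSigma_cascadeZ X ν n).stronglyMeasurable.aestronglyMeasurable
  have hs' := h.filtration.le n s hs
  have hnonneg (m : ℕ) : 0 ≤ ∫ ω in s, cascadeZ X ν m ω ∂P :=
    integral_nonneg (h.cascadeZ_nonneg ν m)
  rw [← ENNReal.ofReal_eq_ofReal_iff (hnonneg _) (hnonneg _), h.ofReal_setIntegral_cascadeZ _ hs',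
    h.ofReal_setIntegral_cascadeZ _ hs']
  refine (h.lintegral_mul_ofReal_cascadeZ_succ n ?_).symm
  exact (@measurable_one _ _ _ (h.filtration n) _).indicator hs

lemma mul_measure_exists_le_cascadeZ_le [IsFiniteMeasure ν] (h : CascadeM1 P X X₀) (K : NNReal)
    (n : ℕ) : K * P {ω | ∃ k ≤ n, (K : ℝ) ≤ cascadeZ X ν k ω} ≤ ν univ := by
  have := h.isProbabilityMeasure
  have hdoob := maximal_ineq h.martingale_cascadeZ.submartingale (h.cascadeZ_nonneg ν) (ε := K) n
  simp only [Finset.le_sup'_iff, Finset.mem_range_succ_iff] at hdoob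
  refine hdoob.trans ?_
  rw [← h.lintegral_ofReal_cascadeZ n, ← ofReal_integral_eq_lintegral_ofReal
    (h.integrable_cascadeZ n) (ae_of_all _ (h.cascadeZ_nonneg ν n))]
  exact ENNReal.ofReal_le_ofReal
    (setIntegral_le_integral (h.integrable_cascadeZ n) (ae_of_all _ (h.cascadeZ_nonneg ν n)))

lemma measurableSet_exists_le_cascadeZ (h : CascadeM1 P X X₀) (ν : Measure (SymbSpace b)) (K : ℝ)
    (n : ℕ) : MeasurableSet {ω | ∃ k ≤ n, K ≤ cascadeZ X ν k ω} := by
  have hunion : {ω | ∃ k ≤ n, K ≤ cascadeZ X ν k ω} =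
      ⋃ k ≤ n, {ω | K ≤ cascadeZ X ν k ω} := by ext; simp
  rw [hunion]
  exact .iUnion fun k => .iUnion fun _ =>
    measurableSet_le measurable_const (h.measurable_cascadeZ ν k)

/-- A spine cylinder of large mass makes the total mass large, and biasing by the spine weights is
biasing by the total mass. -/
lemma peyriere_exists_lt_spineMass_le [IsFiniteMeasure ν] (h : CascadeM1 P X X₀) (K : NNReal)
    (n : ℕ) : peyriere P X₀ ν {q | ∃ k ≤ n, (K : ℝ≥0∞) < spineMass ν k q} ≤
      eLpNorm ({ω | ∃ k ≤ n, (K : ℝ) ≤ cascadeZ X ν k ω}.indicator (cascadeZ X ν n)) 1 P := by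
  have hA := h.measurableSet_exists_le_cascadeZ ν K n
  have hB : MeasurableSet {q | ∃ k ≤ n, (K : ℝ≥0∞) < spineMass ν k q} := by
    have hunion : {q | ∃ k ≤ n, (K : ℝ≥0∞) < spineMass ν k q} =
        ⋃ k ≤ n, {q | (K : ℝ≥0∞) < spineMass ν k q} := by ext; simp
    rw [hunion]
    exact .iUnion fun k => .iUnion fun _ =>
      measurableSet_lt measurable_const (measurable_spineMass ν k)
  have hBn (x : SymbSpace b) : DependsOn
      (fun ξ => (x, ξ) ∈ {q | ∃ k ≤ n, (K : ℝ≥0∞) < spineMass ν k q}) (Iio n) := fun ξ ξ' hξ => by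
    refine propext (exists_congr fun k => and_congr_right fun hk => ?_)
    rw [show spineMass ν k (x, ξ) = spineMass ν k (x, ξ') from dependsOn_spineMass ν hk x hξ]
  rw [h.eLpNorm_indicator_cascadeZ n hA, h.peyriere_eq_lintegral ν hB hBn,
    h.lintegral_mul_ofReal_cascadeZ n (measurable_one.indicator hA)]
  refine lintegral_mono fun x => lintegral_mono fun ω => ?_
  rw [mul_comm]
  gcongr
  refine indicator_one_le_indicator_one fun ⟨k, hk, hq⟩ => ⟨k, hk, ?_⟩
  have hmass := hq.le.trans (h.spineMass_le_ofReal_cascadeZ k x ω)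
  rwa [← ENNReal.ofReal_coe_nnreal, ENNReal.ofReal_le_ofReal_iff (h.cascadeZ_nonneg ν k ω)] at hmass

lemma exists_nat_peyriere_exists_lt_spineMass_le [IsFiniteMeasure ν] (h : CascadeM1 P X X₀)
    (hUI : UniformIntegrable (cascadeZ X ν) 1 P) {ε : ℝ} (hε : 0 < ε) :
    ∃ K : ℕ, peyriere P X₀ ν {q | ∃ k, (K : ℝ≥0∞) < spineMass ν k q} ≤ ENNReal.ofReal ε := by
  obtain ⟨δ, hδ, hUIδ⟩ := hUI.unifIntegrable hε
  obtain ⟨K, hK⟩ := exists_nat_gt (ν.real univ / δ)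
  have hKpos : (0 : ℝ) < K := (div_nonneg measureReal_nonneg hδ.le).trans_lt hK
  refine ⟨K, ?_⟩
  have hunion : {q | ∃ k, (K : ℝ≥0∞) < spineMass ν k q} =
      ⋃ n : ℕ, {q | ∃ k ≤ n, (K : ℝ≥0∞) < spineMass ν k q} := by
    ext q
    simpa using ⟨fun ⟨k, hk⟩ => ⟨k, k, le_rfl, hk⟩, fun ⟨_, k, _, hk⟩ => ⟨k, hk⟩⟩
  have hmono : Monotone fun n : ℕ => {q | ∃ k ≤ n, (K : ℝ≥0∞) < spineMass ν k q} :=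
    fun m n hmn q ⟨k, hk, hq⟩ => ⟨k, hk.trans hmn, hq⟩
  rw [hunion, hmono.measure_iUnion]
  refine iSup_le fun n => (h.peyriere_exists_lt_spineMass_le K n).trans
    (hUIδ n _ (h.measurableSet_exists_le_cascadeZ ν _ n) ?_)
  have hνK : ν univ ≤ ENNReal.ofReal δ * K := by
    rw [← ENNReal.ofReal_toReal (measure_ne_top ν univ), ← ENNReal.ofReal_natCast,
      ← ENNReal.ofReal_mul hδ.le]
    exact ENNReal.ofReal_le_ofReal ((div_lt_iff₀' hδ).1 hK).le
  refine (ENNReal.mul_le_mul_iff_right (by exact_mod_cast hKpos.ne') (ENNReal.natCast_ne_top K)).1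
    ((h.mul_measure_exists_le_cascadeZ_le K n).trans (hνK.trans_eq (mul_comm _ _)))

theorem exists_forall_spineMass_le_of_uniformIntegrable [IsFiniteMeasure ν]
    (h : CascadeM1 P X X₀) (hUI : UniformIntegrable (cascadeZ X ν) 1 P) :
    ∀ᵐ q ∂peyriere P X₀ ν, ∃ K : ℕ, ∀ k, spineMass ν k q ≤ K := by
  rw [ae_iff]
  refine le_antisymm (ENNReal.le_of_forall_pos_le_add fun ε hε _ => ?_) zero_le
  obtain ⟨K, hK⟩ := h.exists_nat_peyriere_exists_lt_spineMass_le hUI (ε := ε) hε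
  rw [zero_add, ← ENNReal.ofReal_coe_nnreal]
  refine (measure_mono fun q hq => ?_).trans hK
  simpa using (not_exists.1 hq) K

end CascadeM1

end Martingale

section Birkhoff

lemma integral_comp_of_measurePreserving {α β : Type*} [MeasurableSpace α] [MeasurableSpace β]
    {μ : Measure α} {ν : Measure β} {T : α → β} {φ : β → ℝ} (hT : MeasurePreserving T μ ν)
    (hφ : Measurable φ) : ∫ x, φ (T x) ∂μ = ∫ y, φ y ∂ν := by
  rw [← hT.map_eq, integral_map hT.aemeasurable hφ.aestronglyMeasurable]

variable {α : Type*} {T : α → α} {φ : α → ℝ}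

/-- The maximum of the Birkhoff sums of `φ` up to time `n`, in the recursive form
`M_{n+1} = max 0 (φ + M_n ∘ T)` on which the maximal ergodic lemma rests. -/
def maxBirkhoffSum (T : α → α) (φ : α → ℝ) : ℕ → α → ℝ
  | 0, _ => 0
  | n + 1, x => max 0 (φ x + maxBirkhoffSum T φ n (T x))

lemma maxBirkhoffSum_nonneg (T : α → α) (φ : α → ℝ) (n : ℕ) (x : α) :
    0 ≤ maxBirkhoffSum T φ n x := by
  cases n
  exacts [le_rfl, le_max_left _ _]

lemma monotone_maxBirkhoffSum (T : α → α) (φ : α → ℝ) (x : α) :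
    Monotone fun n => maxBirkhoffSum T φ n x := by
  refine monotone_nat_of_le_succ fun n => ?_
  induction n generalizing x with
  | zero => exact maxBirkhoffSum_nonneg T φ 1 x
  | succ n ih => exact max_le_max le_rfl (add_le_add le_rfl (ih (T x)))

lemma birkhoffSum_le_maxBirkhoffSum (T : α → α) (φ : α → ℝ) (n : ℕ) (x : α) :
    birkhoffSum T φ n x ≤ maxBirkhoffSum T φ n x := by
  induction n generalizing x with
  | zero => simp [maxBirkhoffSum]
  | succ n ih =>
    rw [birkhoffSum_succ']
    exact le_max_of_le_right (add_le_add le_rfl (ih (T x)))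

lemma abs_maxBirkhoffSum_succ_sub_le (T : α → α) (φ : α → ℝ) (n : ℕ) (x : α) :
    |maxBirkhoffSum T φ (n + 1) x - maxBirkhoffSum T φ n (T x)| ≤ |φ x| := by
  have hnonneg := maxBirkhoffSum_nonneg T φ n (T x)
  rw [maxBirkhoffSum]
  rcases le_total 0 (φ x + maxBirkhoffSum T φ n (T x)) with hpos | hneg
  · rw [max_eq_right hpos, add_sub_cancel_right]
  · rw [max_eq_left hneg, abs_of_nonpos (by linarith), abs_of_nonpos (by linarith)]
    linarith

lemma tendsto_maxBirkhoffSum_succ_sub {x : α}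
    (hx : ¬ BddAbove (range fun n => maxBirkhoffSum T φ n (T x))) :
    Tendsto (fun n => maxBirkhoffSum T φ (n + 1) x - maxBirkhoffSum T φ n (T x)) atTop
      (nhds (φ x)) := by
  obtain ⟨N, hN⟩ : ∃ N, |φ x| < maxBirkhoffSum T φ N (T x) := by
    by_contra! hle
    exact hx ⟨_, forall_mem_range.2 hle⟩
  refine tendsto_atTop_of_eventually_const (i₀ := N) fun n hn => ?_
  have hle := monotone_maxBirkhoffSum T φ (T x) hn
  dsimp only at hle
  rw [maxBirkhoffSum, max_eq_right (by linarith [neg_abs_le (φ x)]), add_sub_cancel_right]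

lemma bddAbove_maxBirkhoffSum_comp_iff (x : α) :
    BddAbove (range fun n => maxBirkhoffSum T φ n (T x)) ↔
      BddAbove (range fun n => maxBirkhoffSum T φ n x) := by
  simp only [bddAbove_def, forall_mem_range]
  constructor
  · rintro ⟨K, hK⟩
    exact ⟨|φ x| + K, fun n => by
      linarith [(abs_le.1 (abs_maxBirkhoffSum_succ_sub_le T φ n x)).2, hK n,
        monotone_maxBirkhoffSum T φ x n.le_succ]⟩
  · rintro ⟨K, hK⟩
    exact ⟨|φ x| + K, fun n => by
      linarith [(abs_le.1 (abs_maxBirkhoffSum_succ_sub_le T φ n x)).1, hK (n + 1)]⟩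

variable [MeasurableSpace α] {ν : Measure α}

lemma measurable_maxBirkhoffSum (hT : Measurable T) (hφ : Measurable φ) (n : ℕ) :
    Measurable (maxBirkhoffSum T φ n) := by
  induction n with
  | zero => exact measurable_const
  | succ n ih => exact measurable_const.max (hφ.add (ih.comp hT))

lemma integrable_maxBirkhoffSum (hT : MeasurePreserving T ν ν) (hφ : Integrable φ ν) (n : ℕ) :
    Integrable (maxBirkhoffSum T φ n) ν := by
  induction n with
  | zero => exact integrable_zero _ _ _
  | succ n ih => exact (integrable_zero _ _ _).sup (hφ.add (hT.integrable_comp_of_integrable ih))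

/-- Hopf's maximal ergodic lemma. -/
lemma integral_nonneg_of_not_bddAbove_maxBirkhoffSum (hT : MeasurePreserving T ν ν)
    (hφ : Measurable φ) (hφi : Integrable φ ν)
    (hunbdd : ∀ᵐ x ∂ν, ¬ BddAbove (range fun n => maxBirkhoffSum T φ n x)) :
    0 ≤ ∫ x, φ x ∂ν := by
  have hmeas := fun n => measurable_maxBirkhoffSum hT.measurable hφ n
  have hint := integrable_maxBirkhoffSum hT hφi
  have hlim : Tendsto (fun n =>
      ∫ x, (maxBirkhoffSum T φ (n + 1) x - maxBirkhoffSum T φ n (T x)) ∂ν) atTop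
      (nhds (∫ x, φ x ∂ν)) := by
    refine tendsto_integral_of_dominated_convergence (fun x => |φ x|)
      (fun n => ((hmeas (n + 1)).sub ((hmeas n).comp hT.measurable)).aestronglyMeasurable)
      hφi.abs (fun n => ae_of_all _ (abs_maxBirkhoffSum_succ_sub_le T φ n)) ?_
    filter_upwards [hT.quasiMeasurePreserving.ae hunbdd] with x hx
    exact tendsto_maxBirkhoffSum_succ_sub hx
  refine ge_of_tendsto' hlim fun n => ?_
  have hcomp : Integrable (fun x => maxBirkhoffSum T φ n (T x)) ν :=
    hT.integrable_comp_of_integrable (hint n)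
  rw [integral_sub (hint _) hcomp, integral_comp_of_measurePreserving hT (hmeas n), sub_nonneg]
  exact integral_mono (hint _) (hint _) fun x => monotone_maxBirkhoffSum T φ x n.le_succ

lemma ae_bddAbove_birkhoffSum_of_integral_neg (hT : Ergodic T ν) (hφ : Measurable φ)
    (hφi : Integrable φ ν) (hneg : ∫ x, φ x ∂ν < 0) :
    ∀ᵐ x ∂ν, BddAbove (range fun n => birkhoffSum T φ n x) := by
  rcases hT.ae_mem_or_ae_notMem
    (measurableSet_bddAbove_range fun n => measurable_maxBirkhoffSum hT.measurable hφ n)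
    (Set.ext bddAbove_maxBirkhoffSum_comp_iff) with hbdd | hunbdd
  · filter_upwards [hbdd] with x ⟨K, hK⟩
    exact ⟨K, forall_mem_range.2 fun n =>
      (birkhoffSum_le_maxBirkhoffSum T φ n x).trans (hK (mem_range_self n))⟩
  · exact absurd (integral_nonneg_of_not_bddAbove_maxBirkhoffSum hT.toMeasurePreserving hφ hφi
      hunbdd) hneg.not_ge

end Birkhoff

section Entropy

variable {b : ℕ}

lemma measurable_shiftMap : Measurable (shiftMap b) :=
  measurable_pi_lambda _ fun _ => measurable_pi_apply _

lemma wordPrefix_succ (x : SymbSpace b) (n : ℕ) :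
    wordPrefix x (n + 1) = x 0 :: wordPrefix (shiftMap b x) n :=
  List.ofFn_succ

lemma cylinder_cons (i : Fin b) (w : List (Fin b)) : _root_.cylinder (i :: w) =
    {x | x 0 = i} ∩ shiftMap b ⁻¹' _root_.cylinder w := by
  ext x
  simp [mem_cylinder_iff, wordPrefix_succ]

/-- The information `-log ν([w])` carried by the word `w`. -/
def wordInfo (ν : Measure (SymbSpace b)) (w : List (Fin b)) : ℝ :=
  -Real.log (ν (_root_.cylinder w)).toReal

/-- The conditional information of the first letter of `x` given its `j` next letters. -/
def letterInfo (ν : Measure (SymbSpace b)) (j : ℕ) (x : SymbSpace b) : ℝ :=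
  wordInfo ν (wordPrefix x (j + 1)) - wordInfo ν (wordPrefix (shiftMap b x) j)

lemma letterInfo_eq_comp_wordPrefix (ν : Measure (SymbSpace b)) (j : ℕ) :
    letterInfo ν j = fun x =>
      (fun w => wordInfo ν w - wordInfo ν w.tail) (wordPrefix x (j + 1)) := by
  funext x
  simp [letterInfo, wordPrefix_succ]

lemma measurable_letterInfo (ν : Measure (SymbSpace b)) (j : ℕ) :
    Measurable (letterInfo ν j) := by
  rw [letterInfo_eq_comp_wordPrefix]
  exact measurable_comp_wordPrefix (j + 1) fun w => wordInfo ν w - wordInfo ν w.tail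

lemma ae_cylinder_wordPrefix_ne_zero (ν : Measure (SymbSpace b)) :
    ∀ᵐ x ∂ν, ∀ n, ν (_root_.cylinder (wordPrefix x n)) ≠ 0 := by
  have hnull : ν (⋃ w ∈ {w : List (Fin b) | ν (_root_.cylinder w) = 0}, _root_.cylinder w) = 0 :=
    (measure_biUnion_null_iff (to_countable _)).2 fun w hw => hw
  filter_upwards [measure_eq_zero_iff_ae_notMem.1 hnull] with x hx n hn
  exact hx (mem_biUnion hn (mem_cylinder_wordPrefix.2 rfl))

variable {ν : Measure (SymbSpace b)}

lemma measure_cylinder_cons_le (hσ : MeasurePreserving (shiftMap b) ν ν) (i : Fin b)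
    (w : List (Fin b)) : ν (_root_.cylinder (i :: w)) ≤ ν (_root_.cylinder w) := by
  rw [cylinder_cons, ← hσ.measure_preimage (measurableSet_cylinder w).nullMeasurableSet]
  exact measure_mono inter_subset_right

lemma letterInfo_nonneg [IsFiniteMeasure ν] (hσ : MeasurePreserving (shiftMap b) ν ν) {j : ℕ}
    {x : SymbSpace b} (hx : ν (_root_.cylinder (wordPrefix x (j + 1))) ≠ 0) :
    0 ≤ letterInfo ν j x := by
  rw [letterInfo, wordInfo, wordInfo, neg_sub_neg, sub_nonneg]
  refine Real.log_le_log (ENNReal.toReal_pos hx (measure_ne_top _ _))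
    (ENNReal.toReal_mono (measure_ne_top _ _) ?_)
  rw [wordPrefix_succ]
  exact measure_cylinder_cons_le hσ _ _

lemma wordInfo_nil [IsProbabilityMeasure ν] : wordInfo ν [] = 0 := by
  have huniv : _root_.cylinder ([] : List (Fin b)) = univ :=
    eq_univ_of_forall fun x => mem_cylinder_iff.2 rfl
  simp [wordInfo, huniv]

lemma wordInfo_nonneg [IsProbabilityMeasure ν] (w : List (Fin b)) : 0 ≤ wordInfo ν w :=
  neg_nonneg.2 (Real.log_nonpos ENNReal.toReal_nonneg measureReal_le_one)

lemma sum_letterInfo [IsProbabilityMeasure ν] (n : ℕ) (x : SymbSpace b) :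
    ∑ k ∈ Finset.range n, letterInfo ν (n - 1 - k) ((shiftMap b)^[k] x) =
      wordInfo ν (wordPrefix x n) := by
  induction n generalizing x with
  | zero => simp [wordPrefix, wordInfo_nil]
  | succ n ih =>
    have htail : ∑ k ∈ Finset.range n, letterInfo ν (n + 1 - 1 - (k + 1)) ((shiftMap b)^[k + 1] x) =
        wordInfo ν (wordPrefix (shiftMap b x) n) := by
      rw [← ih]
      refine Finset.sum_congr rfl fun k _ => ?_
      rw [Function.iterate_succ_apply, show n + 1 - 1 - (k + 1) = n - 1 - k by omega]
    rw [Finset.sum_range_succ', htail, Function.iterate_zero_apply, letterInfo]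
    simp

lemma integral_wordInfo [IsFiniteMeasure ν] {n : ℕ} (hn : n ≠ 0) :
    ∫ x, wordInfo ν (wordPrefix x n) ∂ν = n * entropySeq ν n := by
  rw [integral_comp_wordPrefix ν n (wordInfo ν), entropySeq, mul_inv_cancel_left₀ (mod_cast hn)]
  exact Finset.sum_congr rfl fun u _ => by rw [wordInfo]; ring

lemma integrable_letterInfo [IsFiniteMeasure ν] (j : ℕ) : Integrable (letterInfo ν j) ν := by
  rw [letterInfo_eq_comp_wordPrefix]
  exact integrable_comp_wordPrefix ν (j + 1) fun w => wordInfo ν w - wordInfo ν w.tail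

lemma integral_letterInfo [IsFiniteMeasure ν] (hσ : MeasurePreserving (shiftMap b) ν ν) (j : ℕ) :
    ∫ x, letterInfo ν j x ∂ν =
      ∫ x, wordInfo ν (wordPrefix x (j + 1)) ∂ν - ∫ x, wordInfo ν (wordPrefix x j) ∂ν := by
  have hmeas := measurable_comp_wordPrefix j (wordInfo ν)
  have hint := integrable_comp_wordPrefix ν j (wordInfo ν)
  rw [← integral_comp_of_measurePreserving hσ hmeas]
  exact integral_sub (integrable_comp_wordPrefix ν (j + 1) (wordInfo ν))
    (hσ.integrable_comp_of_integrable hint)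

lemma exp_neg_wordInfo [IsFiniteMeasure ν] {w : List (Fin b)} (hw : ν (_root_.cylinder w) ≠ 0) :
    Real.exp (-wordInfo ν w) = (ν (_root_.cylinder w)).toReal := by
  rw [wordInfo, neg_neg, Real.exp_log (ENNReal.toReal_pos hw (measure_ne_top _ _))]

lemma exp_neg_letterInfo [IsFiniteMeasure ν] {j : ℕ} {x : SymbSpace b}
    (hx : ν (_root_.cylinder (wordPrefix x (j + 1))) ≠ 0)
    (hσx : ν (_root_.cylinder (wordPrefix (shiftMap b x) j)) ≠ 0) :
    Real.exp (-letterInfo ν j x) = (ν (_root_.cylinder (wordPrefix x (j + 1)))).toReal /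
      (ν (_root_.cylinder (wordPrefix (shiftMap b x) j))).toReal := by
  rw [letterInfo, neg_sub, sub_eq_neg_add, ← sub_neg_eq_add, Real.exp_sub, exp_neg_wordInfo hx,
    exp_neg_wordInfo hσx]

lemma measurableSet_wordPrefix_shiftMap_mem (s : Set (List (Fin b))) (j : ℕ) :
    MeasurableSet ((fun x : SymbSpace b => wordPrefix (shiftMap b x) j) ⁻¹' s) :=
  measurableSet_setOfPred.2
    ((measurable_comp_wordPrefix j fun w => w ∈ s).comp measurable_shiftMap)

/-- The filtration generated by the letters of index `1, …, j`. -/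
def tailFiltration (b : ℕ) : Filtration ℕ (inferInstance : MeasurableSpace (SymbSpace b)) where
  seq j := MeasurableSpace.comap (fun x => wordPrefix (shiftMap b x) j) ⊤
  mono' i j hij := by
    have hcomp : (fun x : SymbSpace b => wordPrefix (shiftMap b x) i) =
        List.take i ∘ fun x => wordPrefix (shiftMap b x) j :=
      funext fun x => (take_wordPrefix _ hij).symm
    dsimp only
    rw [hcomp, ← MeasurableSpace.comap_comp]
    exact MeasurableSpace.comap_mono le_top
  le' j := by
    rintro _ ⟨s, -, rfl⟩
    exact measurableSet_wordPrefix_shiftMap_mem s j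

/-- The conditional probability of the first letter `i` given the `w.length` next letters `w`. -/
def letterProb (ν : Measure (SymbSpace b)) (i : Fin b) (w : List (Fin b)) : ℝ :=
  (ν (_root_.cylinder (i :: w))).toReal / (ν (_root_.cylinder w)).toReal

lemma setIntegral_comp_wordPrefix_shiftMap [IsFiniteMeasure ν] (i : Fin b) (j : ℕ)
    (φ : List (Fin b) → ℝ) : ∫ x in {x | x 0 = i}, φ (wordPrefix (shiftMap b x) j) ∂ν =
      ∑ u : Fin j → Fin b, φ (List.ofFn u) *
        (ν (_root_.cylinder (i :: List.ofFn u))).toReal := by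
  have hcyl : ∀ w : List (Fin b), (ν.restrict {x | x 0 = i}).map (shiftMap b)
      (_root_.cylinder w) = ν (_root_.cylinder (i :: w)) := fun w => by
    rw [Measure.map_apply measurable_shiftMap (measurableSet_cylinder w), Measure.restrict_apply
      (measurable_shiftMap (measurableSet_cylinder w)), cylinder_cons, inter_comm]
  have hmeas : Measurable fun x => φ (wordPrefix x j) := measurable_comp_wordPrefix j φ
  rw [← integral_map (f := fun x => φ (wordPrefix x j)) measurable_shiftMap.aemeasurable
    hmeas.aestronglyMeasurable, integral_comp_wordPrefix]
  simp only [hcyl]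

lemma integral_mul_letterProb [IsFiniteMeasure ν] (hσ : MeasurePreserving (shiftMap b) ν ν)
    (i : Fin b) (j : ℕ) (φ : List (Fin b) → ℝ) :
    ∫ x, φ (wordPrefix (shiftMap b x) j) * letterProb ν i (wordPrefix (shiftMap b x) j) ∂ν =
      ∑ u : Fin j → Fin b, φ (List.ofFn u) *
        (ν (_root_.cylinder (i :: List.ofFn u))).toReal := by
  have hmeas := measurable_comp_wordPrefix j fun w => φ w * letterProb ν i w
  rw [integral_comp_of_measurePreserving hσ hmeas,
    integral_comp_wordPrefix ν j fun w => φ w * letterProb ν i w]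
  refine Finset.sum_congr rfl fun u _ => ?_
  rw [mul_assoc, letterProb, div_mul_cancel_of_imp]
  intro hzero
  rw [ENNReal.toReal_eq_zero_iff, or_iff_left (measure_ne_top _ _)] at hzero ⊢
  exact le_antisymm (hzero ▸ measure_cylinder_cons_le hσ _ _) zero_le

lemma letterProb_ae_eq_condExp [IsFiniteMeasure ν] (hσ : MeasurePreserving (shiftMap b) ν ν)
    (i : Fin b) (j : ℕ) : (fun x => letterProb ν i (wordPrefix (shiftMap b x) j)) =ᵐ[ν]
      ν[{x : SymbSpace b | x 0 = i}.indicator fun _ => (1 : ℝ) | tailFiltration b j] := by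
  have hletter : MeasurableSet {x : SymbSpace b | x 0 = i} :=
    measurableSet_eq_fun (measurable_pi_apply 0) measurable_const
  refine ae_eq_condExp_of_forall_setIntegral_eq ((tailFiltration b).le j)
    ((integrable_const _).indicator hletter) (fun s _ _ => ?_) ?_ ?_
  · exact (hσ.integrable_comp_of_integrable
      (integrable_comp_wordPrefix ν j (letterProb ν i))).integrableOn
  · rintro _ ⟨s, -, rfl⟩ -
    have hs := measurableSet_wordPrefix_shiftMap_mem s j
    have hprob := integral_mul_letterProb hσ i j (s.indicator 1)
    have hset := setIntegral_comp_wordPrefix_shiftMap (ν := ν) i j (s.indicator 1)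
    rw [← integral_indicator hs, setIntegral_indicator hletter, inter_comm,
      ← setIntegral_indicator hs]
    refine Eq.trans ?_ (hprob.trans hset.symm)
    refine integral_congr_ae (ae_of_all _ fun x => ?_)
    by_cases hx : wordPrefix (shiftMap b x) j ∈ s <;> simp [hx]
  · refine StronglyMeasurable.aestronglyMeasurable (Measurable.stronglyMeasurable ?_)
    exact (measurable_from_top (f := letterProb ν i)).comp (comap_measurable _)

lemma ae_exists_tendsto_letterProb [IsFiniteMeasure ν]
    (hσ : MeasurePreserving (shiftMap b) ν ν) : ∀ᵐ x ∂ν, ∃ g : ℝ,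
      Tendsto (fun j => letterProb ν (x 0) (wordPrefix (shiftMap b x) j)) atTop (nhds g) := by
  have heq : ∀ᵐ x ∂ν, ∀ i j, letterProb ν i (wordPrefix (shiftMap b x) j) =
      (ν[{x : SymbSpace b | x 0 = i}.indicator fun _ => (1 : ℝ) | tailFiltration b j]) x :=
    ae_all_iff.2 fun i => ae_all_iff.2 fun j => letterProb_ae_eq_condExp hσ i j
  have hlim := ae_all_iff.2 fun i : Fin b => tendsto_ae_condExp (μ := ν) (ℱ := tailFiltration b)
    ({x : SymbSpace b | x 0 = i}.indicator fun _ => (1 : ℝ))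
  filter_upwards [heq, hlim] with x hx hxlim
  exact ⟨_, (hxlim (x 0)).congr fun j => (hx _ _).symm⟩

end Entropy

section ShannonMcMillan

lemma frequently_le_succ_sub {H : ℕ → ℝ} {h : ℝ}
    (hH : Tendsto (fun n : ℕ => H n / n) atTop (nhds h)) {a : ℝ} (ha : a < h) :
    ∃ᶠ m in atTop, a ≤ H (m + 1) - H m := by
  by_contra hfreq
  simp only [not_frequently, not_le] at hfreq
  obtain ⟨N, hN⟩ := eventually_atTop.1 hfreq
  have hlin : ∀ n ≥ N, H n ≤ H N - N * a + n * a := fun n hn => by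
    induction n, hn using Nat.le_induction with
    | base => linarith
    | succ n hn ih => push_cast; linarith [hN n hn]
  have hle : ∀ᶠ n : ℕ in atTop, H n / n ≤ (H N - N * a) / n + a := by
    filter_upwards [eventually_ge_atTop N, eventually_gt_atTop 0] with n hn hpos
    have hpos' : (0 : ℝ) < n := Nat.cast_pos.2 hpos
    rw [div_add' _ _ _ hpos'.ne', div_le_div_iff_of_pos_right hpos', mul_comm a]
    exact hlin n hn
  have hlim : Tendsto (fun n : ℕ => (H N - N * a) / n + a) atTop (nhds (0 + a)) :=
    (tendsto_const_div_atTop_nhds_zero_nat _).add_const _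
  linarith [le_of_tendsto_of_tendsto hH hlim hle]

lemma tendsto_iInf_add {u : ℕ → ℝ} {g : ℝ} (hu : Tendsto u atTop (nhds g)) :
    Tendsto (fun m => ⨅ j, u (m + j)) atTop (nhds g) := by
  have hbdd : ∀ m, BddBelow (range fun j => u (m + j)) := fun m =>
    hu.bddBelow_range.mono (range_comp_subset_range (m + ·) u)
  refine tendsto_order.2 ⟨fun a ha => ?_, fun a ha => ?_⟩
  · obtain ⟨a', haa', ha'⟩ := exists_between ha
    filter_upwards [eventually_forall_ge_atTop.2 (hu.eventually_const_lt ha')] with m hm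
    exact haa'.trans_le (le_ciInf fun j => (hm _ (Nat.le_add_right m j)).le)
  · filter_upwards [hu.eventually_lt_const ha] with m hm
    exact (ciInf_le (hbdd m) 0).trans_lt hm

lemma tendsto_min_of_tendsto_exp_neg {t : ℕ → ℝ} {g : ℝ} (L : ℝ)
    (ht : Tendsto (fun j => Real.exp (-t j)) atTop (nhds g)) :
    Tendsto (fun j => min L (t j)) atTop (nhds (-Real.log (max (Real.exp (-L)) g))) := by
  have heq : ∀ j, min L (t j) = -Real.log (max (Real.exp (-L)) (Real.exp (-t j))) := fun j => by
    rw [← Real.exp_monotone.map_max, Real.log_exp, max_neg_neg, neg_neg]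
  simp only [heq]
  exact ((tendsto_const_nhds.max ht).log (lt_max_of_lt_left (Real.exp_pos _)).ne').neg

variable {b : ℕ}

/-- The conditional information of the first letter, clamped to `[0, L]`. -/
def truncLetterInfo (ν : Measure (SymbSpace b)) (L : ℝ) (j : ℕ) (x : SymbSpace b) : ℝ :=
  max 0 (min L (letterInfo ν j x))

/-- The infimum of the clamped conditional informations of the first letter given at least `m`
next letters. -/
def infLetterInfo (ν : Measure (SymbSpace b)) (L : ℝ) (m : ℕ) (x : SymbSpace b) : ℝ :=
  ⨅ j, truncLetterInfo ν L (m + j) x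

variable {ν : Measure (SymbSpace b)} {L : ℝ}

lemma measurable_truncLetterInfo (ν : Measure (SymbSpace b)) (L : ℝ) (j : ℕ) :
    Measurable (truncLetterInfo ν L j) :=
  measurable_const.max (measurable_const.min (measurable_letterInfo ν j))

lemma truncLetterInfo_nonneg (j : ℕ) (x : SymbSpace b) : 0 ≤ truncLetterInfo ν L j x :=
  le_max_left _ _

lemma truncLetterInfo_le (hL : 0 ≤ L) (j : ℕ) (x : SymbSpace b) : truncLetterInfo ν L j x ≤ L :=
  max_le hL (min_le_left _ _)

lemma letterInfo_sub_le_truncLetterInfo (j : ℕ) (x : SymbSpace b) :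
    letterInfo ν j x - max 0 (letterInfo ν j x - L) ≤ truncLetterInfo ν L j x := by
  refine le_max_of_le_right (le_min ?_ ?_)
  · linarith [le_max_right 0 (letterInfo ν j x - L)]
  · linarith [le_max_left 0 (letterInfo ν j x - L)]

lemma infLetterInfo_le_truncLetterInfo {m j : ℕ} (hmj : m ≤ j) (x : SymbSpace b) :
    infLetterInfo ν L m x ≤ truncLetterInfo ν L j x := by
  obtain ⟨k, rfl⟩ := Nat.exists_eq_add_of_le hmj
  exact ciInf_le ⟨0, forall_mem_range.2 fun j => truncLetterInfo_nonneg _ _⟩ k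

lemma infLetterInfo_nonneg (m : ℕ) (x : SymbSpace b) : 0 ≤ infLetterInfo ν L m x :=
  le_ciInf fun _ => truncLetterInfo_nonneg _ _

lemma infLetterInfo_le (hL : 0 ≤ L) (m : ℕ) (x : SymbSpace b) : infLetterInfo ν L m x ≤ L :=
  (infLetterInfo_le_truncLetterInfo le_rfl x).trans (truncLetterInfo_le hL m x)

lemma measurable_infLetterInfo (ν : Measure (SymbSpace b)) (L : ℝ) (m : ℕ) :
    Measurable (infLetterInfo ν L m) :=
  Measurable.iInf fun j => measurable_truncLetterInfo ν L (m + j)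

lemma integrable_truncLetterInfo [IsFiniteMeasure ν] (hL : 0 ≤ L) (j : ℕ) :
    Integrable (truncLetterInfo ν L j) ν :=
  .of_mem_Icc 0 L (measurable_truncLetterInfo ν L j).aemeasurable
    (ae_of_all _ fun x => ⟨truncLetterInfo_nonneg j x, truncLetterInfo_le hL j x⟩)

lemma integrable_infLetterInfo [IsFiniteMeasure ν] (hL : 0 ≤ L) (m : ℕ) :
    Integrable (infLetterInfo ν L m) ν :=
  .of_mem_Icc 0 L (measurable_infLetterInfo ν L m).aemeasurable
    (ae_of_all _ fun x => ⟨infLetterInfo_nonneg m x, infLetterInfo_le hL m x⟩)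

lemma ae_exists_tendsto_truncLetterInfo [IsFiniteMeasure ν]
    (hσ : MeasurePreserving (shiftMap b) ν ν) (L : ℝ) :
    ∀ᵐ x ∂ν, ∃ g : ℝ, Tendsto (fun j => truncLetterInfo ν L j x) atTop (nhds g) := by
  have hpos := ae_cylinder_wordPrefix_ne_zero ν
  filter_upwards [hpos, hσ.quasiMeasurePreserving.ae hpos, ae_exists_tendsto_letterProb hσ]
    with x hx hσx ⟨g, hg⟩
  refine ⟨_, tendsto_const_nhds.max (tendsto_min_of_tendsto_exp_neg L (hg.congr fun j => ?_))⟩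
  rw [exp_neg_letterInfo (hx _) (hσx _), letterProb, wordPrefix_succ]

lemma tendsto_integral_truncLetterInfo_sub_infLetterInfo [IsFiniteMeasure ν]
    (hσ : MeasurePreserving (shiftMap b) ν ν) (hL : 0 ≤ L) :
    Tendsto (fun m => ∫ x, (truncLetterInfo ν L m x - infLetterInfo ν L m x) ∂ν) atTop
      (nhds 0) := by
  rw [← integral_zero (SymbSpace b) ℝ (μ := ν)]
  refine tendsto_integral_of_dominated_convergence (fun _ => L) (fun m =>
    ((measurable_truncLetterInfo ν L m).sub (measurable_infLetterInfo ν L m)).aestronglyMeasurable)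
    (integrable_const _) (fun m => ae_of_all _ fun x => ?_) ?_
  · rw [Real.norm_of_nonneg (sub_nonneg.2 (infLetterInfo_le_truncLetterInfo le_rfl x))]
    linarith [infLetterInfo_nonneg (ν := ν) (L := L) m x, truncLetterInfo_le (ν := ν) hL m x]
  · filter_upwards [ae_exists_tendsto_truncLetterInfo hσ L] with x ⟨g, hg⟩
    simpa [infLetterInfo] using hg.sub (tendsto_iInf_add hg)

lemma sum_measure_cylinder_tail [IsProbabilityMeasure ν] (j : ℕ) :
    ∑ u : Fin (j + 1) → Fin b, (ν (_root_.cylinder (List.ofFn u).tail)).toReal = b := by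
  have hone : ∑ u : Fin j → Fin b, (ν (_root_.cylinder (List.ofFn u))).toReal = 1 := by
    simpa using (integral_comp_wordPrefix ν j fun _ => (1 : ℝ)).symm
  rw [← (Fin.consEquiv fun _ : Fin (j + 1) => Fin b).sum_comp, Fintype.sum_prod_type]
  simp [Fin.consEquiv, List.ofFn_succ, hone]

lemma max_wordInfo_sub_mul_le [IsFiniteMeasure ν] (hσ : MeasurePreserving (shiftMap b) ν ν)
    (i : Fin b) (w : List (Fin b)) (L : ℝ) :
    max 0 (wordInfo ν (i :: w) - wordInfo ν w - L) * (ν (_root_.cylinder (i :: w))).toReal ≤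
      (ν (_root_.cylinder w)).toReal * Real.exp (-L) := by
  by_cases hiw : ν (_root_.cylinder (i :: w)) = 0
  · simpa [hiw] using mul_nonneg ENNReal.toReal_nonneg (Real.exp_pos _).le
  have hw : ν (_root_.cylinder w) ≠ 0 := fun hw =>
    hiw (le_antisymm (hw ▸ measure_cylinder_cons_le hσ i w) zero_le)
  set t := wordInfo ν (i :: w) - wordInfo ν w - L with ht
  calc max 0 t * (ν (_root_.cylinder (i :: w))).toReal
      ≤ Real.exp t * (ν (_root_.cylinder (i :: w))).toReal := by
        gcongr
        exact max_le (Real.exp_pos _).le (by linarith [Real.add_one_le_exp t])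
    _ = (ν (_root_.cylinder w)).toReal * Real.exp (-L) := by
        rw [← exp_neg_wordInfo hiw, ← exp_neg_wordInfo hw, ← Real.exp_add, ← Real.exp_add, ht]
        ring_nf

lemma integral_max_letterInfo_sub_le [IsProbabilityMeasure ν]
    (hσ : MeasurePreserving (shiftMap b) ν ν) (j : ℕ) (L : ℝ) :
    ∫ x, max 0 (letterInfo ν j x - L) ∂ν ≤ b * Real.exp (-L) := by
  have hword : (fun x => max 0 (letterInfo ν j x - L)) = fun x =>
      (fun w => max 0 (wordInfo ν w - wordInfo ν w.tail - L)) (wordPrefix x (j + 1)) := by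
    rw [letterInfo_eq_comp_wordPrefix]
  rw [hword, integral_comp_wordPrefix ν (j + 1)
    fun w => max 0 (wordInfo ν w - wordInfo ν w.tail - L), ← sum_measure_cylinder_tail (ν := ν) j,
    Finset.sum_mul]
  refine Finset.sum_le_sum fun u _ => ?_
  rw [List.ofFn_succ]
  exact max_wordInfo_sub_mul_le hσ _ _ L

lemma sum_infLetterInfo_sub_le_wordInfo [IsProbabilityMeasure ν]
    (hσ : MeasurePreserving (shiftMap b) ν ν) (hL : 0 ≤ L) (m : ℕ) :
    ∀ᵐ x ∂ν, ∀ n, birkhoffSum (shiftMap b) (infLetterInfo ν L m) n x - m * L ≤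
      wordInfo ν (wordPrefix x n) := by
  have hpos : ∀ᵐ x ∂ν, ∀ j, 0 ≤ letterInfo ν j x :=
    (ae_cylinder_wordPrefix_ne_zero ν).mono fun x hx j => letterInfo_nonneg hσ (hx _)
  have hiter := ae_all_iff.2 fun k => (hσ.iterate k).quasiMeasurePreserving.ae hpos
  filter_upwards [hiter] with x hx n
  have hterm : ∀ k ∈ Finset.range n, infLetterInfo ν L m ((shiftMap b)^[k] x) ≤
      letterInfo ν (n - 1 - k) ((shiftMap b)^[k] x) + if n - 1 - k < m then L else 0 := by
    intro k _
    split_ifs with hk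
    · linarith [hx k (n - 1 - k), infLetterInfo_le (ν := ν) hL m ((shiftMap b)^[k] x)]
    · rw [add_zero]
      exact (infLetterInfo_le_truncLetterInfo (not_lt.1 hk) _).trans
        (max_le (hx _ _) (min_le_right _ _))
  have hboundary : ∑ k ∈ Finset.range n, (if n - 1 - k < m then L else 0) ≤ m * L := by
    rw [Finset.sum_range_reflect (fun j => if j < m then L else 0) n, ← Finset.sum_filter,
      Finset.sum_const, nsmul_eq_mul]
    refine mul_le_mul_of_nonneg_right (Nat.cast_le.2 ?_) hL
    rw [← Finset.card_range m]
    exact Finset.card_le_card fun j hj => by simp_all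
  have hsum := Finset.sum_le_sum hterm
  rw [Finset.sum_add_distrib, sum_letterInfo] at hsum
  rw [birkhoffSum]
  linarith

lemma tendsto_integral_wordInfo_div [IsFiniteMeasure ν] {hν : ℝ}
    (hent : Tendsto (entropySeq ν) atTop (nhds hν)) :
    Tendsto (fun n : ℕ => (∫ x, wordInfo ν (wordPrefix x n) ∂ν) / n) atTop (nhds hν) := by
  refine hent.congr' ?_
  filter_upwards [eventually_ne_atTop 0] with n hn
  rw [integral_wordInfo hn, mul_div_cancel_left₀ _ (Nat.cast_ne_zero.2 hn)]

lemma exists_lt_integral_infLetterInfo [IsProbabilityMeasure ν]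
    (hσ : MeasurePreserving (shiftMap b) ν ν) {hν c : ℝ}
    (hent : Tendsto (entropySeq ν) atTop (nhds hν)) (hc : c < hν) :
    ∃ L ≥ 0, ∃ m, c < ∫ x, infLetterInfo ν L m x ∂ν := by
  obtain ⟨ε, hε, hcε⟩ : ∃ ε > 0, c + 2 * ε < hν := ⟨(hν - c) / 4, by linarith, by linarith⟩
  have hexp : Tendsto (fun L : ℝ => (b : ℝ) * Real.exp (-L)) atTop (nhds 0) := by
    simpa using Real.tendsto_exp_neg_atTop_nhds_zero.const_mul (b : ℝ)
  obtain ⟨L, hLε, hL⟩ := ((hexp.eventually_lt_const hε).and (eventually_ge_atTop 0)).exists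
  obtain ⟨m, hm, hmε⟩ := ((frequently_le_succ_sub (tendsto_integral_wordInfo_div hent)
    hcε).and_eventually ((tendsto_integral_truncLetterInfo_sub_infLetterInfo hσ
      hL).eventually_lt_const hε)).exists
  refine ⟨L, hL, m, ?_⟩
  have htail : Integrable (fun x => max 0 (letterInfo ν m x - L)) ν :=
    (integrable_zero _ _ _).sup ((integrable_letterInfo m).sub (integrable_const L))
  have hmono := integral_mono ((integrable_letterInfo m).sub htail)
    (integrable_truncLetterInfo hL m) (letterInfo_sub_le_truncLetterInfo m)
  simp only [Pi.sub_apply] at hmono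
  rw [integral_sub (integrable_letterInfo m) htail, integral_letterInfo hσ] at hmono
  rw [integral_sub (integrable_truncLetterInfo hL m) (integrable_infLetterInfo hL m)] at hmε
  linarith [integral_max_letterInfo_sub_le hσ m L]

/-- The lower bound in the Shannon–McMillan–Breiman theorem. -/
theorem ae_exists_mul_sub_le_wordInfo [IsProbabilityMeasure ν] (hσ : Ergodic (shiftMap b) ν)
    {hν c : ℝ} (hent : Tendsto (entropySeq ν) atTop (nhds hν)) (hc : c < hν) :
    ∀ᵐ x ∂ν, ∃ D : ℝ, ∀ n : ℕ, n * c - D ≤ wordInfo ν (wordPrefix x n) := by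
  obtain ⟨L, hL, m, hm⟩ := exists_lt_integral_infLetterInfo hσ.toMeasurePreserving hent hc
  have hint := integrable_infLetterInfo (ν := ν) hL m
  have hneg : ∫ x, (c - infLetterInfo ν L m x) ∂ν < 0 := by
    rw [integral_sub (integrable_const _) hint]
    simpa using hm
  filter_upwards [ae_bddAbove_birkhoffSum_of_integral_neg hσ
    (measurable_const.sub (measurable_infLetterInfo ν L m)) ((integrable_const c).sub hint) hneg,
    sum_infLetterInfo_sub_le_wordInfo hσ.toMeasurePreserving hL m] with x ⟨K, hK⟩ hx
  refine ⟨K + m * L, fun n => ?_⟩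
  have hsum : n * c - birkhoffSum (shiftMap b) (infLetterInfo ν L m) n x ≤ K := by
    simpa [birkhoffSum] using hK (mem_range_self n)
  linarith [hx n]

end ShannonMcMillan
section PositiveNegativeParts

variable {α : Type*} [MeasurableSpace α] {μ : Measure α} {φ : α → ℝ}

lemma integrable_of_lintegral_ofReal_ne_top (hφ : Measurable φ)
    (hpos : ∫⁻ t, ENNReal.ofReal (φ t) ∂μ ≠ ∞) (hneg : ∫⁻ t, ENNReal.ofReal (-φ t) ∂μ ≠ ∞) :
    Integrable φ μ := by
  refine ⟨hφ.aestronglyMeasurable, (hasFiniteIntegral_iff_norm φ).2 ?_⟩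
  calc ∫⁻ t, ENNReal.ofReal ‖φ t‖ ∂μ
      ≤ ∫⁻ t, (ENNReal.ofReal (φ t) + ENNReal.ofReal (-φ t)) ∂μ := lintegral_mono fun t => by
        rw [Real.norm_eq_abs, abs, ENNReal.ofReal_max]
        exact max_le_add_of_nonneg zero_le zero_le
    _ = ∫⁻ t, ENNReal.ofReal (φ t) ∂μ + ∫⁻ t, ENNReal.ofReal (-φ t) ∂μ :=
        lintegral_add_left hφ.ennreal_ofReal _
    _ < ∞ := ENNReal.add_lt_top.2 ⟨hpos.lt_top, hneg.lt_top⟩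

lemma ofReal_integral_eq_lintegral_sub_lintegral (hφ : Integrable φ μ) :
    ENNReal.ofReal (∫ t, φ t ∂μ) =
      ∫⁻ t, ENNReal.ofReal (φ t) ∂μ - ∫⁻ t, ENNReal.ofReal (-φ t) ∂μ := by
  have hpos : ∫⁻ t, ENNReal.ofReal (φ t) ∂μ ≠ ∞ := hφ.lintegral_lt_top.ne
  have hneg : ∫⁻ t, ENNReal.ofReal (-φ t) ∂μ ≠ ∞ := hφ.neg.lintegral_lt_top.ne
  rw [integral_eq_lintegral_pos_part_sub_lintegral_neg_part hφ,
    ENNReal.ofReal_sub _ ENNReal.toReal_nonneg, ENNReal.ofReal_toReal hpos,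
    ENNReal.ofReal_toReal hneg]

lemma tendsto_lintegral_ofReal_min_natCast (hφ : Measurable φ) :
    Tendsto (fun K : ℕ => ∫⁻ t, ENNReal.ofReal (min (φ t) K) ∂μ) atTop
      (nhds (∫⁻ t, ENNReal.ofReal (φ t) ∂μ)) := by
  refine lintegral_tendsto_of_tendsto_of_monotone
    (fun K => (hφ.min measurable_const).ennreal_ofReal.aemeasurable)
    (ae_of_all _ fun t K L hKL => ?_) (ae_of_all _ fun t => ?_)
  · exact ENNReal.ofReal_le_ofReal (min_le_min_left _ (Nat.cast_le.2 hKL))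
  · obtain ⟨N, hN⟩ := exists_nat_ge (φ t)
    refine tendsto_atTop_of_eventually_const (i₀ := N) fun K hK => ?_
    rw [min_eq_left (hN.trans (Nat.cast_le.2 hK))]

lemma exists_integrable_le_lt_integral [IsFiniteMeasure μ] (hφ : Measurable φ)
    (hneg : ∫⁻ t, ENNReal.ofReal (-φ t) ∂μ ≠ ∞) {a : ℝ}
    (ha : ENNReal.ofReal a <
      ∫⁻ t, ENNReal.ofReal (φ t) ∂μ - ∫⁻ t, ENNReal.ofReal (-φ t) ∂μ) :
    ∃ ψ : α → ℝ, Measurable ψ ∧ Integrable ψ μ ∧ ψ ≤ φ ∧ a < ∫ t, ψ t ∂μ := by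
  have hlim := ENNReal.Tendsto.sub (tendsto_lintegral_ofReal_min_natCast (μ := μ) hφ)
    tendsto_const_nhds (Or.inr hneg)
  obtain ⟨K, hK⟩ := (hlim.eventually (lt_mem_nhds ha)).exists
  let ψ : α → ℝ := fun t => min (φ t) K
  have hψ : Measurable ψ := hφ.min measurable_const
  have hψneg (t : α) : ENNReal.ofReal (-ψ t) = ENNReal.ofReal (-φ t) := by
    have hK0 : ENNReal.ofReal (-K) = 0 := ENNReal.ofReal_of_nonpos (by simp)
    rw [← max_neg_neg, ENNReal.ofReal_max, hK0, max_eq_left zero_le]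
  have hψpos : ∫⁻ t, ENNReal.ofReal (ψ t) ∂μ ≠ ∞ := by
    refine ((lintegral_mono fun t => ENNReal.ofReal_le_ofReal (min_le_right _ _)).trans_lt ?_).ne
    rw [lintegral_const]
    exact ENNReal.mul_lt_top ENNReal.ofReal_lt_top (measure_lt_top _ _)
  have hψi := integrable_of_lintegral_ofReal_ne_top hψ hψpos (by simpa only [hψneg] using hneg)
  refine ⟨ψ, hψ, hψi, fun t => min_le_left _ _, ?_⟩
  simp only [← hψneg] at hK
  rw [← ofReal_integral_eq_lintegral_sub_lintegral hψi] at hK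
  exact (ENNReal.ofReal_lt_ofReal_iff'.1 hK).1

end PositiveNegativeParts

section SizeBias

variable {b : ℕ} {Ω : Type*} [MeasurableSpace Ω] {P : Measure Ω}
  {X : List (Fin b) → Ω → ℝ} {X₀ : Ω → ℝ}

lemma ae_sizeBias_pos (ρ : Measure ℝ) : ∀ᵐ t ∂sizeBias ρ, 0 < t := by
  rw [sizeBias, ae_withDensity_iff ENNReal.measurable_ofReal]
  exact ae_of_all _ fun t ht => ENNReal.ofReal_pos.1 (pos_iff_ne_zero.2 ht)

namespace CascadeM1

lemma lintegral_sizeBias (h : CascadeM1 P X X₀) {G : ℝ → ℝ≥0∞} (hG : Measurable G) :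
    ∫⁻ t, G t ∂sizeBias (P.map X₀) = ∫⁻ ω, ENNReal.ofReal (X₀ ω) * G (X₀ ω) ∂P := by
  rw [sizeBias, lintegral_withDensity_eq_lintegral_mul _ ENNReal.measurable_ofReal hG,
    lintegral_map (ENNReal.measurable_ofReal.mul hG) h.meas₀]
  rfl

lemma lintegral_sizeBias_inv_le (h : CascadeM1 P X X₀) :
    ∫⁻ t, ENNReal.ofReal t⁻¹ ∂sizeBias (P.map X₀) ≤ 1 := by
  have := h.isProbabilityMeasure
  rw [h.lintegral_sizeBias measurable_inv.ennreal_ofReal]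
  calc ∫⁻ ω, ENNReal.ofReal (X₀ ω) * ENNReal.ofReal (X₀ ω)⁻¹ ∂P ≤ ∫⁻ _, 1 ∂P :=
        lintegral_mono fun ω => by
          rw [← ENNReal.ofReal_mul (h.nonneg₀ ω), ← ENNReal.ofReal_one]
          exact ENNReal.ofReal_le_ofReal mul_inv_le_one
    _ = 1 := by simp

lemma lintegral_sizeBias_neg_log_ne_top (h : CascadeM1 P X X₀) :
    ∫⁻ t, ENNReal.ofReal (-Real.log t) ∂sizeBias (P.map X₀) ≠ ∞ := by
  refine ((lintegral_mono_ae ?_).trans_lt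
    (h.lintegral_sizeBias_inv_le.trans_lt ENNReal.one_lt_top)).ne
  filter_upwards [ae_sizeBias_pos (P.map X₀)] with t ht
  exact ENNReal.ofReal_le_ofReal (by linarith [Real.one_sub_inv_le_log_of_pos ht])

lemma entropyX_eq (h : CascadeM1 P X X₀) :
    entropyX P X₀ = ∫⁻ t, ENNReal.ofReal (Real.log t) ∂sizeBias (P.map X₀) -
      ∫⁻ t, ENNReal.ofReal (-Real.log t) ∂sizeBias (P.map X₀) := by
  rw [h.lintegral_sizeBias Real.measurable_log.ennreal_ofReal,
    h.lintegral_sizeBias (G := fun t => ENNReal.ofReal (-Real.log t))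
      Real.measurable_log.neg.ennreal_ofReal, entropyX]
  simp only [← mul_neg, ENNReal.ofReal_mul (h.nonneg₀ _)]

lemma integrable_log_of_entropyX_ne_top (h : CascadeM1 P X X₀) (htop : entropyX P X₀ ≠ ∞) :
    Integrable Real.log (sizeBias (P.map X₀)) := by
  have hneg := h.lintegral_sizeBias_neg_log_ne_top
  refine integrable_of_lintegral_ofReal_ne_top Real.measurable_log (fun hpos => htop ?_) hneg
  rw [h.entropyX_eq, hpos, ENNReal.top_sub hneg]

lemma entropyX_eq_ofReal_integral_log (h : CascadeM1 P X X₀) (htop : entropyX P X₀ ≠ ∞) :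
    entropyX P X₀ = ENNReal.ofReal (∫ t, Real.log t ∂sizeBias (P.map X₀)) := by
  rw [h.entropyX_eq,
    ofReal_integral_eq_lintegral_sub_lintegral (h.integrable_log_of_entropyX_ne_top htop)]

lemma integral_log_sizeBias_nonneg (h : CascadeM1 P X X₀)
    (hlog : Integrable Real.log (sizeBias (P.map X₀))) :
    0 ≤ ∫ t, Real.log t ∂sizeBias (P.map X₀) := by
  have := h.isProbabilityMeasure_sizeBias
  have hinv_nonneg : 0 ≤ᵐ[sizeBias (P.map X₀)] fun t => t⁻¹ := by
    filter_upwards [ae_sizeBias_pos _] with t ht using (inv_pos.2 ht).le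
  have hinv : Integrable (fun t : ℝ => t⁻¹) (sizeBias (P.map X₀)) :=
    ⟨measurable_inv.aestronglyMeasurable, (hasFiniteIntegral_iff_ofReal hinv_nonneg).2
      (h.lintegral_sizeBias_inv_le.trans_lt ENNReal.one_lt_top)⟩
  have hinv_le : ∫ t, t⁻¹ ∂sizeBias (P.map X₀) ≤ 1 := by
    rw [integral_eq_lintegral_of_nonneg_ae hinv_nonneg measurable_inv.aestronglyMeasurable]
    exact ENNReal.toReal_le_of_le_ofReal zero_le_one (by simpa using h.lintegral_sizeBias_inv_le)
  calc (0 : ℝ) ≤ ∫ t, (1 - t⁻¹) ∂sizeBias (P.map X₀) := by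
        rw [integral_sub (integrable_const _) hinv]
        simpa using hinv_le
    _ ≤ ∫ t, Real.log t ∂sizeBias (P.map X₀) := by
        refine integral_mono_ae ((integrable_const _).sub hinv) hlog ?_
        filter_upwards [ae_sizeBias_pos _] with t ht using Real.one_sub_inv_le_log_of_pos ht

end CascadeM1

end SizeBias

section IIDSequence

variable {ρ : Measure ℝ} [IsProbabilityMeasure ρ]

lemma ae_infinitePi_forall {p : ℝ → Prop} (hp : ∀ᵐ t ∂ρ, p t) :
    ∀ᵐ ξ ∂Measure.infinitePi (fun _ : ℕ => ρ), ∀ k, p (ξ k) :=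
  ae_all_iff.2 fun k =>
    (measurePreserving_eval_infinitePi (fun _ : ℕ => ρ) k).quasiMeasurePreserving.ae hp

lemma ae_tendsto_average_infinitePi {ψ : ℝ → ℝ} (hψ : Measurable ψ) (hψi : Integrable ψ ρ) :
    ∀ᵐ ξ ∂Measure.infinitePi (fun _ : ℕ => ρ),
      Tendsto (fun n : ℕ => (∑ k ∈ Finset.range n, ψ (ξ k)) / n) atTop (nhds (∫ t, ψ t ∂ρ)) := by
  have heval := measurePreserving_eval_infinitePi (fun _ : ℕ => ρ)
  have hmean : ∫ ξ, ψ (ξ 0) ∂Measure.infinitePi (fun _ : ℕ => ρ) = ∫ t, ψ t ∂ρ := by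
    nth_rw 2 [← (heval 0).map_eq]
    exact (integral_map (heval 0).aemeasurable hψ.aestronglyMeasurable).symm
  have hident (k : ℕ) : IdentDistrib (fun ξ : ℕ → ℝ => ξ k) (fun ξ => ξ 0)
      (Measure.infinitePi fun _ => ρ) (Measure.infinitePi fun _ => ρ) :=
    ⟨(heval k).aemeasurable, (heval 0).aemeasurable, (heval k).map_eq.trans (heval 0).map_eq.symm⟩
  have hindep : iIndepFun (fun (k : ℕ) (ξ : ℕ → ℝ) => ψ (ξ k))
      (Measure.infinitePi fun _ : ℕ => ρ) :=
    iIndepFun_infinitePi fun _ => hψ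
  have hlim := strong_law_ae_real (fun k (ξ : ℕ → ℝ) => ψ (ξ k))
    ((heval 0).integrable_comp_of_integrable hψi) (fun _ _ hij => hindep.indepFun hij)
    fun k => (hident k).comp hψ
  rwa [hmean] at hlim

end IIDSequence

section StrictInequality

variable {b : ℕ} {Ω : Type*} [MeasurableSpace Ω] {P : Measure Ω}
  {X : List (Fin b) → Ω → ℝ} {X₀ : Ω → ℝ} {ν : Measure (SymbSpace b)}

lemma spineMass_eq_ofReal_exp [IsFiniteMeasure ν] {x : SymbSpace b} {ξ : ℕ → ℝ} {n : ℕ}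
    (hξ : ∀ k, 0 < ξ k) (hx : ν (_root_.cylinder (wordPrefix x n)) ≠ 0) :
    spineMass ν n (x, ξ) = ENNReal.ofReal
      (Real.exp (∑ k ∈ Finset.range n, Real.log (ξ k) - wordInfo ν (wordPrefix x n))) := by
  have hprod : Real.exp (∑ k ∈ Finset.range n, Real.log (ξ k)) = ∏ k ∈ Finset.range n, ξ k := by
    rw [Real.exp_sum]
    exact Finset.prod_congr rfl fun k _ => Real.exp_log (hξ k)
  rw [sub_eq_add_neg, Real.exp_add, exp_neg_wordInfo hx, hprod,
    ENNReal.ofReal_mul (Finset.prod_nonneg fun k _ => (hξ k).le),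
    ENNReal.ofReal_prod_of_nonneg fun k _ => (hξ k).le, ENNReal.ofReal_toReal (measure_ne_top _ _)]
  rfl

lemma CascadeM1.ae_spineMass_eq_ofReal_exp [IsProbabilityMeasure ν] (h : CascadeM1 P X X₀) :
    ∀ᵐ q ∂peyriere P X₀ ν, ∀ n, spineMass ν n q = ENNReal.ofReal (Real.exp
      (∑ k ∈ Finset.range n, Real.log (q.2 k) - wordInfo ν (wordPrefix q.1 n))) := by
  have := h.isProbabilityMeasure_sizeBias
  filter_upwards [Measure.quasiMeasurePreserving_fst.ae (ae_cylinder_wordPrefix_ne_zero ν),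
    Measure.quasiMeasurePreserving_snd.ae (ae_infinitePi_forall (ae_sizeBias_pos (P.map X₀)))]
    with q hx hξ n using spineMass_eq_ofReal_exp hξ (hx n)

theorem CascadeM1.uniformIntegrable_of_entropyX_lt [IsProbabilityMeasure ν] (h : CascadeM1 P X X₀)
    (hσ : Ergodic (shiftMap b) ν) {hν : ℝ} (hent : Tendsto (entropySeq ν) atTop (nhds hν))
    (hlt : entropyX P X₀ < ENNReal.ofReal hν) : UniformIntegrable (cascadeZ X ν) 1 P := by
  have := h.isProbabilityMeasure_sizeBias
  have hlog := h.integrable_log_of_entropyX_ne_top hlt.ne_top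
  have hint : ∫ t, Real.log t ∂sizeBias (P.map X₀) < hν := by
    rw [h.entropyX_eq_ofReal_integral_log hlt.ne_top] at hlt
    exact (ENNReal.ofReal_lt_ofReal_iff'.1 hlt).1
  obtain ⟨c, hintc, hcν⟩ := exists_between hint
  obtain ⟨c', hintc', hcc'⟩ := exists_between hintc
  refine h.uniformIntegrable_of_tsum_spineMass_lt_top ?_
  filter_upwards [h.ae_spineMass_eq_ofReal_exp (ν := ν),
    Measure.quasiMeasurePreserving_fst.ae (ae_exists_mul_sub_le_wordInfo hσ hent hcν),
    Measure.quasiMeasurePreserving_snd.ae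
      (ae_tendsto_average_infinitePi Real.measurable_log hlog)] with q hmass ⟨D, hD⟩ hlim
  simp only [hmass]
  have hgeom : Summable fun n : ℕ => Real.exp D * Real.exp (-(c - c')) ^ n :=
    (summable_geometric_of_lt_one (Real.exp_pos _).le
      (Real.exp_lt_one_iff.2 (neg_neg_of_pos (sub_pos.2 hcc')))).mul_left _
  refine Summable.tsum_ofReal_lt_top (hgeom.of_norm_bounded_eventually_nat ?_)
  filter_upwards [hlim.eventually_lt_const hintc', eventually_gt_atTop 0] with n hn hn0
  rw [div_lt_iff₀ (Nat.cast_pos.2 hn0)] at hn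
  rw [Real.norm_of_nonneg (Real.exp_pos _).le, ← Real.exp_nat_mul, ← Real.exp_add,
    Real.exp_le_exp]
  linarith [hD n]

end StrictInequality

section ReverseInequality

variable {b : ℕ} {Ω : Type*} [MeasurableSpace Ω] {P : Measure Ω}
  {X : List (Fin b) → Ω → ℝ} {X₀ : Ω → ℝ} {ν : Measure (SymbSpace b)} [IsProbabilityMeasure ν]
  {hν : ℝ}

lemma CascadeM1.ae_exists_sum_log_le_of_uniformIntegrable (h : CascadeM1 P X X₀)
    (hUI : UniformIntegrable (cascadeZ X ν) 1 P) :
    ∀ᵐ q ∂peyriere P X₀ ν, ∃ K : ℝ, ∀ n,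
      ∑ k ∈ Finset.range n, Real.log (q.2 k) ≤ wordInfo ν (wordPrefix q.1 n) + K := by
  filter_upwards [h.exists_forall_spineMass_le_of_uniformIntegrable hUI,
    h.ae_spineMass_eq_ofReal_exp (ν := ν)] with q ⟨K, hK⟩ hmass
  refine ⟨K, fun n => ?_⟩
  have hexp := hK n
  rw [hmass, ← ENNReal.ofReal_natCast, ENNReal.ofReal_le_ofReal_iff (Nat.cast_nonneg K)] at hexp
  linarith [Real.add_one_le_exp
    (∑ k ∈ Finset.range n, Real.log (q.2 k) - wordInfo ν (wordPrefix q.1 n))]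

lemma entropy_nonneg (hent : Tendsto (entropySeq ν) atTop (nhds hν)) : 0 ≤ hν :=
  ge_of_tendsto' (tendsto_integral_wordInfo_div hent) fun _ =>
    div_nonneg (integral_nonneg fun _ => wordInfo_nonneg _) (Nat.cast_nonneg _)

lemma le_entropy_of_ae_eventually_le_wordInfo (hent : Tendsto (entropySeq ν) atTop (nhds hν))
    {a : ℝ} (ha : ∀ᵐ x ∂ν, ∀ᶠ n : ℕ in atTop, n * a ≤ wordInfo ν (wordPrefix x n)) : a ≤ hν := by
  have hmeas (n : ℕ) : Measurable fun x : SymbSpace b =>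
      ENNReal.ofReal (wordInfo ν (wordPrefix x n) / n) :=
    measurable_comp_wordPrefix n fun w => ENNReal.ofReal (wordInfo ν w / n)
  have hlintegral (n : ℕ) : ∫⁻ x, ENNReal.ofReal (wordInfo ν (wordPrefix x n) / n) ∂ν =
      ENNReal.ofReal ((∫ x, wordInfo ν (wordPrefix x n) ∂ν) / n) := by
    rw [← integral_div, ofReal_integral_eq_lintegral_ofReal
      ((integrable_comp_wordPrefix ν n (wordInfo ν)).div_const _)
      (ae_of_all _ fun x => div_nonneg (wordInfo_nonneg _) (Nat.cast_nonneg _))]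
  have hliminf : ENNReal.ofReal a ≤ ENNReal.ofReal hν := calc
    ENNReal.ofReal a = ∫⁻ _, ENNReal.ofReal a ∂ν := by simp
    _ ≤ ∫⁻ x, liminf (fun n : ℕ => ENNReal.ofReal (wordInfo ν (wordPrefix x n) / n)) atTop ∂ν := by
        refine lintegral_mono_ae ?_
        filter_upwards [ha] with x hx
        refine le_liminf_of_le (by isBoundedDefault) ?_
        filter_upwards [hx, eventually_gt_atTop 0] with n hn hn0
        exact ENNReal.ofReal_le_ofReal ((le_div_iff₀' (Nat.cast_pos.2 hn0)).2 hn)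
    _ ≤ liminf (fun n : ℕ => ∫⁻ x, ENNReal.ofReal (wordInfo ν (wordPrefix x n) / n) ∂ν) atTop :=
        lintegral_liminf_le hmeas
    _ = ENNReal.ofReal hν := by
        simp only [hlintegral]
        exact (ENNReal.tendsto_ofReal (tendsto_integral_wordInfo_div hent)).liminf_eq
  exact (ENNReal.ofReal_le_ofReal_iff (entropy_nonneg hent)).1 hliminf

theorem CascadeM1.not_uniformIntegrable_of_lt_entropyX (h : CascadeM1 P X X₀)
    (hent : Tendsto (entropySeq ν) atTop (nhds hν)) (hlt : ENNReal.ofReal hν < entropyX P X₀) :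
    ¬UniformIntegrable (cascadeZ X ν) 1 P := by
  intro hUI
  have := h.isProbabilityMeasure_sizeBias
  rw [h.entropyX_eq] at hlt
  obtain ⟨ψ, hψ, hψi, hψlog, hνψ⟩ := exists_integrable_le_lt_integral Real.measurable_log
    h.lintegral_sizeBias_neg_log_ne_top hlt
  obtain ⟨a, hνa, haψ⟩ := exists_between hνψ
  obtain ⟨a', haa', ha'ψ⟩ := exists_between haψ
  refine hνa.not_ge (le_entropy_of_ae_eventually_le_wordInfo hent ?_)
  have hspine : ∀ᵐ q ∂peyriere P X₀ ν,
      ∀ᶠ n : ℕ in atTop, n * a ≤ wordInfo ν (wordPrefix q.1 n) := by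
    filter_upwards [h.ae_exists_sum_log_le_of_uniformIntegrable hUI,
      Measure.quasiMeasurePreserving_snd.ae (ae_tendsto_average_infinitePi hψ hψi)]
      with q ⟨K, hK⟩ hlim
    have hgap : Tendsto (fun n : ℕ => n * (a' - a)) atTop atTop :=
      tendsto_natCast_atTop_atTop.atTop_mul_const (sub_pos.2 haa')
    filter_upwards [hlim.eventually_const_lt ha'ψ, eventually_gt_atTop 0,
      hgap.eventually_ge_atTop K] with n hn hn0 hnK
    rw [lt_div_iff₀' (Nat.cast_pos.2 hn0)] at hn
    have hψsum : ∑ k ∈ Finset.range n, ψ (q.2 k) ≤ ∑ k ∈ Finset.range n, Real.log (q.2 k) :=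
      Finset.sum_le_sum fun k _ => hψlog _
    linarith [hK n]
  filter_upwards [Measure.ae_ae_of_ae_prod hspine] with x hx using hx.exists.choose_spec

end ReverseInequality

section Coboundary

variable {α : Type*} [MeasurableSpace α] {μ : Measure α} [IsFiniteMeasure μ] {T : α → α}
  {N φ p : α → ℝ}

lemma neg_le_clamp_sub_clamp {K a c r : ℝ} (hr : 0 ≤ r) (h : -r ≤ a - c) :
    -r ≤ max (-K) (min a K) - max (-K) (min c K) := by
  grind

lemma tendsto_clamp_natCast (t : ℝ) :
    Tendsto (fun K : ℕ => max (-(K : ℝ)) (min t K)) atTop (nhds t) := by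
  obtain ⟨K₀, hK₀⟩ := exists_nat_ge |t|
  refine tendsto_atTop_of_eventually_const (i₀ := K₀) fun K hK => ?_
  have htK := abs_le.1 (hK₀.trans (Nat.cast_le.2 hK))
  rw [min_eq_left htK.2, max_eq_right htK.1]

/- Clamping `N` to `[-K, K]` preserves the lower bound on `N - N ∘ T` and makes the integral of
this difference vanish; Fatou's lemma then removes the clamp. -/
lemma lintegral_ofReal_coboundary_add_le (hT : MeasurePreserving T μ μ) (hN : Measurable N)
    (hp : Integrable p μ) (hp0 : 0 ≤ p) (hle : ∀ᵐ x ∂μ, -p x ≤ N x - N (T x)) :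
    ∫⁻ x, ENNReal.ofReal (N x - N (T x) + p x) ∂μ ≤ ENNReal.ofReal (∫ x, p x ∂μ) := by
  let clamp (K : ℕ) (x : α) : ℝ := max (-(K : ℝ)) (min (N x) K)
  have hclamp (K : ℕ) : Measurable (clamp K) := measurable_const.max (hN.min measurable_const)
  have hclamp_int (K : ℕ) : Integrable (clamp K) μ :=
    .of_bound (hclamp K).aestronglyMeasurable K (ae_of_all _ fun x => abs_le.2
      ⟨le_max_left _ _, max_le (neg_le_self K.cast_nonneg) (min_le_right _ _)⟩)
  have hclampT_int (K : ℕ) : Integrable (fun x => clamp K (T x)) μ :=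
    hT.integrable_comp_of_integrable (hclamp_int K)
  have hdiff_int (K : ℕ) : Integrable (fun x => clamp K x - clamp K (T x)) μ :=
    (hclamp_int K).sub (hclampT_int K)
  have hintegral (K : ℕ) : ∫⁻ x, ENNReal.ofReal (clamp K x - clamp K (T x) + p x) ∂μ =
      ENNReal.ofReal (∫ x, p x ∂μ) := by
    have hnonneg : ∀ᵐ x ∂μ, 0 ≤ clamp K x - clamp K (T x) + p x := by
      filter_upwards [hle] with x hx
      linarith [neg_le_clamp_sub_clamp (K := K) (hp0 x) hx]
    have hsum : Integrable (fun x => clamp K x - clamp K (T x) + p x) μ := (hdiff_int K).add hp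
    rw [← ofReal_integral_eq_lintegral_ofReal hsum hnonneg,
      integral_add (hdiff_int K) hp, integral_sub (hclamp_int K) (hclampT_int K),
      integral_comp_of_measurePreserving hT (hclamp K), sub_self, zero_add]
  have hlim (x : α) : Tendsto (fun K => ENNReal.ofReal (clamp K x - clamp K (T x) + p x)) atTop
      (nhds (ENNReal.ofReal (N x - N (T x) + p x))) :=
    ENNReal.tendsto_ofReal (((tendsto_clamp_natCast _).sub (tendsto_clamp_natCast _)).add_const _)
  calc ∫⁻ x, ENNReal.ofReal (N x - N (T x) + p x) ∂μ
      = ∫⁻ x, liminf (fun K => ENNReal.ofReal (clamp K x - clamp K (T x) + p x)) atTop ∂μ := by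
        simp only [(hlim _).liminf_eq]
    _ ≤ liminf (fun K => ∫⁻ x, ENNReal.ofReal (clamp K x - clamp K (T x) + p x) ∂μ) atTop :=
        lintegral_liminf_le' fun K => ((hdiff_int K).add hp).aemeasurable.ennreal_ofReal
    _ = ENNReal.ofReal (∫ x, p x ∂μ) := by simp only [hintegral, liminf_const]

theorem ae_eq_coboundary_of_le (hT : MeasurePreserving T μ μ) (hN : Measurable N)
    (hφ : Integrable φ μ) (hφ0 : 0 ≤ ∫ x, φ x ∂μ) (hle : ∀ᵐ x ∂μ, φ x ≤ N x - N (T x)) :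
    ∀ᵐ x ∂μ, φ x = N x - N (T x) := by
  have habs : ∀ᵐ x ∂μ, -|φ x| ≤ N x - N (T x) := by
    filter_upwards [hle] with x hx using (neg_abs_le _).trans hx
  have hnonneg : ∀ᵐ x ∂μ, 0 ≤ N x - N (T x) + |φ x| := by
    filter_upwards [habs] with x hx using by linarith
  have hlint := lintegral_ofReal_coboundary_add_le hT hN hφ.abs (fun x => abs_nonneg _) habs
  have hsum : Integrable (fun x => N x - N (T x) + |φ x|) μ :=
    ⟨((hN.sub (hN.comp hT.measurable)).aestronglyMeasurable.add hφ.abs.aestronglyMeasurable),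
      (hasFiniteIntegral_iff_ofReal hnonneg).2 (hlint.trans_lt ENNReal.ofReal_lt_top)⟩
  have hcob : Integrable (fun x => N x - N (T x)) μ :=
    (hsum.sub hφ.abs).congr (ae_of_all _ fun x => add_sub_cancel_right _ _)
  have hcob_le : ∫ x, (N x - N (T x)) ∂μ ≤ 0 := by
    rw [← ofReal_integral_eq_lintegral_ofReal hsum hnonneg, integral_add hcob hφ.abs,
      ENNReal.ofReal_le_ofReal_iff (integral_nonneg fun x => abs_nonneg _)] at hlint
    linarith
  exact (integral_eq_iff_of_ae_le hφ hcob hle).1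
    (le_antisymm (integral_mono_ae hφ hcob hle) (hcob_le.trans hφ0))

lemma add_iSup_birkhoffSum_le {α : Type*} {T : α → α} {φ : α → ℝ} {x : α}
    (h : BddAbove (range fun n => birkhoffSum T φ n x)) :
    φ x + ⨆ n, birkhoffSum T φ n (T x) ≤ ⨆ n, birkhoffSum T φ n x := by
  rw [add_comm, ← le_sub_iff_add_le]
  refine ciSup_le fun n => ?_
  have hsucc := le_ciSup h (n + 1)
  rw [birkhoffSum_succ'] at hsucc
  linarith

lemma measurable_birkhoffSum {α : Type*} [MeasurableSpace α] {T : α → α} {φ : α → ℝ}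
    (hT : Measurable T) (hφ : Measurable φ) (n : ℕ) : Measurable (birkhoffSum T φ n) :=
  Finset.measurable_sum _ fun k _ => hφ.comp (hT.iterate k)

end Coboundary

section RandomCoboundary

lemma charFun_map_apply_real {α : Type*} [MeasurableSpace α] {μ : Measure α} {u : α → ℝ}
    (hu : AEMeasurable u μ) (t : ℝ) :
    charFun (μ.map u) t = ∫ x, Complex.exp (t * u x * Complex.I) ∂μ := by
  rw [charFun_apply_real, integral_map hu (by fun_prop)]

lemma eq_of_eventually_exp_mul_I_eq {x y : ℝ}
    (h : ∀ᶠ n : ℕ in atTop, Complex.exp (((1 / 2 : ℝ) ^ n : ℝ) * x * Complex.I) =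
      Complex.exp (((1 / 2 : ℝ) ^ n : ℝ) * y * Complex.I)) : x = y := by
  have hlim : Tendsto (fun n : ℕ => (1 / 2 : ℝ) ^ n * (x - y)) atTop (nhds 0) := by
    simpa using (tendsto_pow_atTop_nhds_zero_of_lt_one (r := (1 / 2 : ℝ)) (by norm_num)
      (by norm_num)).mul_const (x - y)
  have hsmall := hlim.eventually (Ioo_mem_nhds (neg_lt_zero.2 Real.two_pi_pos) Real.two_pi_pos)
  obtain ⟨n, hexp, hlow, hup⟩ := (h.and hsmall).exists
  have hone : Complex.exp (((1 / 2 : ℝ) ^ n * (x - y) : ℝ) * Complex.I) = 1 := by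
    have hsplit : (((1 / 2 : ℝ) ^ n * (x - y) : ℝ) : ℂ) * Complex.I =
        ((1 / 2 : ℝ) ^ n : ℝ) * x * Complex.I - ((1 / 2 : ℝ) ^ n : ℝ) * y * Complex.I := by
      push_cast; ring
    rw [hsplit, Complex.exp_sub, hexp, div_self (Complex.exp_ne_zero _)]
  have hcos : Real.cos ((1 / 2 : ℝ) ^ n * (x - y)) = 1 := by
    rw [← Complex.exp_ofReal_mul_I_re, hone, Complex.one_re]
  have hzero := (Real.cos_eq_one_iff_of_lt_of_lt hlow hup).1 hcos
  exact sub_eq_zero.1 ((mul_eq_zero.1 hzero).resolve_left (by positivity))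

theorem exists_ae_eq_const_of_eventually_one_le_norm_charFun {κ : Measure ℝ}
    [IsProbabilityMeasure κ] (h : ∀ᶠ t in nhds 0, 1 ≤ ‖charFun κ t‖) :
    ∃ c, ∀ᵐ x ∂κ, x = c := by
  have hpow : Tendsto (fun n : ℕ => (1 / 2 : ℝ) ^ n) atTop (nhds 0) :=
    tendsto_pow_atTop_nhds_zero_of_lt_one (by norm_num) (by norm_num)
  have hconst (t : ℝ) (ht : 1 ≤ ‖charFun κ t‖) : ∃ z : ℂ, ∀ᵐ x : ℝ ∂κ,
      Complex.exp (t * x * Complex.I) = z := by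
    have hnorm : ∀ᵐ x : ℝ ∂κ, ‖Complex.exp (t * x * Complex.I)‖ ≤ 1 := ae_of_all _ fun x => by
      rw [← Complex.ofReal_mul, Complex.norm_exp_ofReal_mul_I]
    rcases ae_eq_const_or_norm_integral_lt_of_norm_le_const hnorm with hae | hlt
    · exact ⟨_, hae⟩
    · rw [probReal_univ, one_mul, ← charFun_apply_real] at hlt
      exact absurd ht hlt.not_ge
  obtain ⟨N, hN⟩ := eventually_atTop.1 (hpow.eventually h)
  choose! z hz using hconst
  have hall : ∀ᵐ x : ℝ ∂κ, ∀ n, N ≤ n →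
      Complex.exp (((1 / 2 : ℝ) ^ n : ℝ) * x * Complex.I) = z ((1 / 2) ^ n) :=
    ae_all_iff.2 fun n => eventually_imp_distrib_left.2 fun hn => hz _ (hN n hn)
  obtain ⟨c, hc⟩ := hall.exists
  refine ⟨c, ?_⟩
  filter_upwards [hall] with x hx
  refine eq_of_eventually_exp_mul_I_eq ?_
  filter_upwards [eventually_ge_atTop N] with n hn
  rw [hx n hn, hc n hn]

variable {β : Type*} [MeasurableSpace β]

/-- The left shift on sequences with values in an arbitrary type; on `SymbSpace b` it is
`shiftMap b`. -/
def seqShift (ξ : ℕ → β) : ℕ → β := fun n => ξ (n + 1)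

lemma measurable_seqShift : Measurable (seqShift : (ℕ → β) → ℕ → β) :=
  measurable_pi_lambda _ fun n => measurable_pi_apply (n + 1)

variable (ρ : Measure β) [IsProbabilityMeasure ρ]

lemma measurePreserving_seqShift :
    MeasurePreserving seqShift (Measure.infinitePi fun _ : ℕ => ρ)
      (Measure.infinitePi fun _ => ρ) := by
  refine ⟨measurable_seqShift, ?_⟩
  have hshift := ((iIndepFun_infinitePi (P := fun _ : ℕ => ρ) (X := fun _ => id)
    fun _ => measurable_id).precomp (add_left_injective 1)).map_fun_eq_infinitePi_map
      fun n => measurable_pi_apply (n + 1)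
  simp only [Measure.infinitePi_map_eval] at hshift
  exact hshift

lemma indepFun_eval_zero_seqShift :
    IndepFun (fun ξ : ℕ → β => ξ 0) seqShift (Measure.infinitePi fun _ => ρ) := by
  have hindep := (iIndepFun_iff_iIndep _ _ _).1 (iIndepFun_infinitePi (P := fun _ : ℕ => ρ)
    (X := fun _ => id) fun _ => measurable_id)
  have hsplit := indep_iSup_of_disjoint (fun n => (measurable_pi_apply n).comap_le) hindep
    (disjoint_compl_right (a := {0}))
  refine (IndepFun_iff_Indep _ _ _).2 (indep_of_indep_of_le_left
    (indep_of_indep_of_le_right hsplit ?_) ?_)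
  · simp only [MeasurableSpace.pi, MeasurableSpace.comap_iSup, MeasurableSpace.comap_comp]
    exact iSup_le fun n => le_iSup₂_of_le (n + 1) n.succ_ne_zero le_rfl
  · exact le_iSup₂_of_le 0 rfl le_rfl

variable {ρ} {g : β → ℝ}

lemma norm_charFun_map_infinitePi {u v : (ℕ → β) → ℝ} {a : ℝ} (hg : Measurable g)
    (hv : Measurable v)
    (h : ∀ᵐ ξ ∂Measure.infinitePi fun _ => ρ, u ξ = g (ξ 0) + (a + v (seqShift ξ))) (t : ℝ) :
    ‖charFun ((Measure.infinitePi fun _ => ρ).map u) t‖ =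
      ‖charFun (ρ.map g) t‖ * ‖charFun ((Measure.infinitePi fun _ => ρ).map v) t‖ := by
  have hav : Measurable fun ξ => a + v ξ := hv.const_add a
  have hfst : (Measure.infinitePi fun _ => ρ).map (fun ξ : ℕ → β => g (ξ 0)) = ρ.map g := by
    conv_rhs => rw [← Measure.infinitePi_map_eval (fun _ : ℕ => ρ) 0,
      Measure.map_map hg (measurable_pi_apply 0)]
    rfl
  have hsnd : (Measure.infinitePi fun _ => ρ).map (fun ξ : ℕ → β => a + v (seqShift ξ)) =
      (Measure.infinitePi fun _ => ρ).map fun ξ => a + v ξ := by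
    conv_rhs => rw [← (measurePreserving_seqShift ρ).map_eq,
      Measure.map_map hav measurable_seqShift]
    rfl
  have hmul := ((indepFun_eval_zero_seqShift ρ).comp hg hav).charFun_map_add_eq_mul
    (hg.comp (measurable_pi_apply 0)).aemeasurable
    (hav.comp measurable_seqShift).aemeasurable
  rw [Measure.map_congr h]
  refine (congrArg norm (congrFun hmul t)).trans ?_
  rw [Pi.mul_apply, norm_mul]
  refine congrArg₂ _ (congrArg (fun κ => ‖charFun κ t‖) hfst) ?_
  refine (congrArg (fun κ => ‖charFun κ t‖) hsnd).trans ?_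
  have hadd : (fun ξ => a + v ξ) = (fun y => a + y) ∘ v := rfl
  rw [hadd, ← Measure.map_map (measurable_const_add a) hv, charFun_map_const_add, norm_mul,
    Complex.norm_exp_ofReal_mul_I, mul_one]

variable {α : Type*} [MeasurableSpace α] {ν : Measure α} [IsProbabilityMeasure ν] {T : α → α}
  {f : α → ℝ} {M : α × (ℕ → β) → ℝ}

/- The modulus of the fibrewise characteristic function `c` of `M` satisfies
`‖c‖ = ‖charFun (ρ.map g) t‖ * ‖c ∘ T‖`; integrating forces `c = 0`. -/
lemma charFun_map_eq_zero_of_random_coboundary (hT : MeasurePreserving T ν ν) (hg : Measurable g)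
    (hM : Measurable M) (h : ∀ᵐ q ∂ν.prod (Measure.infinitePi fun _ => ρ),
      M q = g (q.2 0) + (f q.1 + M (T q.1, seqShift q.2)))
    {t : ℝ} (ht : ‖charFun (ρ.map g) t‖ < 1) :
    charFun ((ν.prod (Measure.infinitePi fun _ => ρ)).map M) t = 0 := by
  let c (x : α) : ℂ := charFun ((Measure.infinitePi fun _ => ρ).map fun ξ => M (x, ξ)) t
  have hexp_meas : Measurable fun q => Complex.exp (t * M q * Complex.I) := by fun_prop
  have hexp_int : Integrable (fun q => Complex.exp (t * M q * Complex.I))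
      (ν.prod (Measure.infinitePi fun _ => ρ)) :=
    .of_bound hexp_meas.aestronglyMeasurable 1 (ae_of_all _ fun q => by
      rw [← Complex.ofReal_mul, Complex.norm_exp_ofReal_mul_I])
  have hc (x : α) : c x = ∫ ξ, Complex.exp (t * M (x, ξ) * Complex.I)
      ∂Measure.infinitePi fun _ => ρ :=
    charFun_map_apply_real (hM.comp measurable_prodMk_left).aemeasurable t
  have hc_int : Integrable c ν := by
    simpa only [← hc] using hexp_int.integral_prod_left
  have hc_meas : Measurable fun x => ‖c x‖ := by
    simp only [hc]
    exact (hexp_meas.stronglyMeasurable.integral_prod_right').measurable.norm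
  have hrec : ∀ᵐ x ∂ν, ‖c x‖ = ‖charFun (ρ.map g) t‖ * ‖c (T x)‖ := by
    filter_upwards [Measure.ae_ae_of_ae_prod h] with x hx
    exact norm_charFun_map_infinitePi hg (hM.comp measurable_prodMk_left) hx t
  have hfix : ∫ x, ‖c x‖ ∂ν = ‖charFun (ρ.map g) t‖ * ∫ x, ‖c x‖ ∂ν := by
    conv_lhs => rw [integral_congr_ae hrec, integral_const_mul,
      integral_comp_of_measurePreserving hT hc_meas]
  have hzero : c =ᵐ[ν] 0 := by
    have hint : ∫ x, ‖c x‖ ∂ν = 0 := by nlinarith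
    filter_upwards [(integral_eq_zero_iff_of_nonneg (fun x => norm_nonneg _) hc_int.norm).1 hint]
      with x hx using norm_eq_zero.1 hx
  rw [charFun_map_apply_real hM.aemeasurable, integral_prod _ hexp_int]
  simp only [← hc]
  rw [integral_congr_ae hzero]
  simp

theorem exists_ae_eq_const_of_random_coboundary (hT : MeasurePreserving T ν ν) (hg : Measurable g)
    (hM : Measurable M) (h : ∀ᵐ q ∂ν.prod (Measure.infinitePi fun _ => ρ),
      M q = g (q.2 0) + (f q.1 + M (T q.1, seqShift q.2))) :
    ∃ c, ∀ᵐ s ∂ρ, g s = c := by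
  have := Measure.isProbabilityMeasure_map (μ := ρ) hg.aemeasurable
  have := Measure.isProbabilityMeasure_map (μ := ν.prod (Measure.infinitePi fun _ => ρ))
    hM.aemeasurable
  have hone : charFun ((ν.prod (Measure.infinitePi fun _ => ρ)).map M) 0 ≠ 0 := by
    simp [charFun_zero]
  obtain ⟨c, hc⟩ := exists_ae_eq_const_of_eventually_one_le_norm_charFun (κ := ρ.map g) <| by
    filter_upwards [continuous_charFun.continuousAt.eventually_ne hone] with t ht
    exact not_lt.1 fun hlt => ht (charFun_map_eq_zero_of_random_coboundary hT hg hM h hlt)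
  exact ⟨c, ae_of_ae_map hg.aemeasurable hc⟩

end RandomCoboundary

section GibbsDefect

variable {b : ℕ} {ν : Measure (SymbSpace b)} {f : SymbSpace b → ℝ}

/-- The defect of the potential `f`: how far the information of the `n`-cylinder around `x` is from
the Birkhoff sum of `-f`. Property (G) says that it is bounded in `n` for almost every `x`. -/
def gibbsDefect (ν : Measure (SymbSpace b)) (f : SymbSpace b → ℝ) (n : ℕ) (x : SymbSpace b) : ℝ :=
  wordInfo ν (wordPrefix x n) + birkhoffSum (shiftMap b) f n x

lemma measurable_gibbsDefect (hf : Measurable f) (n : ℕ) : Measurable (gibbsDefect ν f n) :=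
  (measurable_comp_wordPrefix n (wordInfo ν)).add (measurable_birkhoffSum measurable_shiftMap hf n)

lemma gibbsDefect_succ (n : ℕ) (x : SymbSpace b) :
    gibbsDefect ν f (n + 1) x = gibbsDefect ν f n (shiftMap b x) + (letterInfo ν n x + f x) := by
  rw [gibbsDefect, gibbsDefect, letterInfo, birkhoffSum_succ']
  ring

/-- The upper limit of the defects, a transfer function between `-f` and `limitLetterInfo ν`. -/
def limsupGibbsDefect (ν : Measure (SymbSpace b)) (f : SymbSpace b → ℝ) (x : SymbSpace b) : ℝ :=
  limsup (fun n => gibbsDefect ν f n x) atTop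

lemma measurable_limsupGibbsDefect (hf : Measurable f) : Measurable (limsupGibbsDefect ν f) :=
  .limsup (measurable_gibbsDefect hf)

variable [IsProbabilityMeasure ν]

lemma PropertyG.ae_exists_abs_gibbsDefect_le (hG : PropertyG ν f) :
    ∀ᵐ x ∂ν, ∃ B : ℝ, ∀ n, |gibbsDefect ν f n x| ≤ B := by
  obtain ⟨-, C, -, hC1, hC⟩ := hG
  filter_upwards [hC1, hC, ae_cylinder_wordPrefix_ne_zero ν] with x h1 hx hpos
  have hC0 : 0 < C x := one_pos.trans_le h1
  refine ⟨Real.log (C x), fun n => ?_⟩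
  rcases n.eq_zero_or_pos with rfl | hn
  · simpa [gibbsDefect, wordPrefix, wordInfo_nil] using Real.log_nonneg h1
  obtain ⟨hlow, hup⟩ := hx n hn
  rw [← exp_neg_wordInfo (hpos n)] at hlow hup
  rw [← Real.exp_log hC0, ← Real.exp_neg, ← Real.exp_add, Real.exp_le_exp] at hlow
  rw [← Real.exp_log hC0, ← Real.exp_add, Real.exp_le_exp] at hup
  rw [gibbsDefect, birkhoffSum, abs_le]
  constructor <;> linarith

/-- The conditional information of the first letter of `x` given all the following ones. -/
def limitLetterInfo (ν : Measure (SymbSpace b)) (x : SymbSpace b) : ℝ :=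
  limsup (fun j => letterInfo ν j x) atTop

lemma measurable_limitLetterInfo (ν : Measure (SymbSpace b)) : Measurable (limitLetterInfo ν) :=
  .limsup (measurable_letterInfo ν)

lemma PropertyG.ae_tendsto_letterInfo (hG : PropertyG ν f)
    (hσ : MeasurePreserving (shiftMap b) ν ν) :
    ∀ᵐ x ∂ν, Tendsto (fun j => letterInfo ν j x) atTop (nhds (limitLetterInfo ν x)) := by
  have hdefect := hG.ae_exists_abs_gibbsDefect_le
  have hpos := ae_cylinder_wordPrefix_ne_zero ν
  filter_upwards [ae_exists_tendsto_letterProb hσ, hdefect, hpos,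
    hσ.quasiMeasurePreserving.ae hdefect, hσ.quasiMeasurePreserving.ae hpos]
    with x ⟨g, hg⟩ ⟨B, hB⟩ hx ⟨B', hB'⟩ hσx
  have hprob (j : ℕ) : letterProb ν (x 0) (wordPrefix (shiftMap b x) j) =
      Real.exp (-letterInfo ν j x) := by
    rw [exp_neg_letterInfo (hx _) (hσx _), wordPrefix_succ, letterProb]
  have hupper (j : ℕ) : letterInfo ν j x ≤ B + B' + |f x| := by
    linarith [(abs_le.1 (hB (j + 1))).2, (abs_le.1 (hB' j)).1, neg_abs_le (f x),
      gibbsDefect_succ (ν := ν) (f := f) j x]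
  simp only [hprob] at hg
  have hg0 : 0 < g := (Real.exp_pos _).trans_le
    (ge_of_tendsto' hg fun j => Real.exp_le_exp.2 (neg_le_neg (hupper j)))
  have hlim : Tendsto (fun j => letterInfo ν j x) atTop (nhds (-Real.log g)) := by
    simpa using (hg.log hg0.ne').neg
  rwa [limitLetterInfo, hlim.limsup_eq]

lemma PropertyG.ae_limitLetterInfo_nonneg (hG : PropertyG ν f)
    (hσ : MeasurePreserving (shiftMap b) ν ν) : 0 ≤ᵐ[ν] limitLetterInfo ν := by
  filter_upwards [hG.ae_tendsto_letterInfo hσ, ae_cylinder_wordPrefix_ne_zero ν] with x hx hpos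
  exact ge_of_tendsto' hx fun j => letterInfo_nonneg hσ (hpos _)

variable {hν : ℝ}

lemma PropertyG.lintegral_ofReal_limitLetterInfo_le (hG : PropertyG ν f)
    (hσ : MeasurePreserving (shiftMap b) ν ν) (hent : Tendsto (entropySeq ν) atTop (nhds hν)) :
    ∫⁻ x, ENNReal.ofReal (limitLetterInfo ν x) ∂ν ≤ ENNReal.ofReal hν := by
  have hlintegral (j : ℕ) : ∫⁻ x, ENNReal.ofReal (letterInfo ν j x) ∂ν = ENNReal.ofReal
      (∫ x, wordInfo ν (wordPrefix x (j + 1)) ∂ν - ∫ x, wordInfo ν (wordPrefix x j) ∂ν) := by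
    rw [← integral_letterInfo hσ, ofReal_integral_eq_lintegral_ofReal (integrable_letterInfo j)]
    filter_upwards [ae_cylinder_wordPrefix_ne_zero ν] with x hx using letterInfo_nonneg hσ (hx _)
  have hdiv : Tendsto (fun n : ℕ => -(∫ x, wordInfo ν (wordPrefix x n) ∂ν) / n) atTop
      (nhds (-hν)) := by
    simpa only [neg_div] using (tendsto_integral_wordInfo_div hent).neg
  refine ge_of_tendsto (ENNReal.continuous_ofReal.continuousWithinAt (s := Ioi hν))
    (eventually_mem_nhdsWithin.mono fun a ha => ?_)
  calc ∫⁻ x, ENNReal.ofReal (limitLetterInfo ν x) ∂ν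
      = ∫⁻ x, liminf (fun j => ENNReal.ofReal (letterInfo ν j x)) atTop ∂ν := by
        refine lintegral_congr_ae ?_
        filter_upwards [hG.ae_tendsto_letterInfo hσ] with x hx
        exact (ENNReal.tendsto_ofReal hx).liminf_eq.symm
    _ ≤ liminf (fun j => ∫⁻ x, ENNReal.ofReal (letterInfo ν j x) ∂ν) atTop :=
        lintegral_liminf_le fun j => (measurable_letterInfo ν j).ennreal_ofReal
    _ ≤ ENNReal.ofReal a := by
        refine liminf_le_of_frequently_le ((frequently_le_succ_sub hdiv (neg_lt_neg ha)).mono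
          fun j hj => ?_)
        rw [hlintegral]
        exact ENNReal.ofReal_le_ofReal (by linarith)

lemma PropertyG.integrable_limitLetterInfo (hG : PropertyG ν f)
    (hσ : MeasurePreserving (shiftMap b) ν ν) (hent : Tendsto (entropySeq ν) atTop (nhds hν)) :
    Integrable (limitLetterInfo ν) ν :=
  ⟨(measurable_limitLetterInfo ν).aestronglyMeasurable,
    (hasFiniteIntegral_iff_ofReal (hG.ae_limitLetterInfo_nonneg hσ)).2
      ((hG.lintegral_ofReal_limitLetterInfo_le hσ hent).trans_lt ENNReal.ofReal_lt_top)⟩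

lemma PropertyG.integral_limitLetterInfo_le (hG : PropertyG ν f)
    (hσ : MeasurePreserving (shiftMap b) ν ν) (hent : Tendsto (entropySeq ν) atTop (nhds hν)) :
    ∫ x, limitLetterInfo ν x ∂ν ≤ hν := by
  rw [← ENNReal.ofReal_le_ofReal_iff (entropy_nonneg hent), ofReal_integral_eq_lintegral_ofReal
    (hG.integrable_limitLetterInfo hσ hent) (hG.ae_limitLetterInfo_nonneg hσ)]
  exact hG.lintegral_ofReal_limitLetterInfo_le hσ hent

lemma PropertyG.ae_limsupGibbsDefect_le (hG : PropertyG ν f)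
    (hσ : MeasurePreserving (shiftMap b) ν ν) :
    ∀ᵐ x ∂ν, limsupGibbsDefect ν f x ≤
      limsupGibbsDefect ν f (shiftMap b x) + (limitLetterInfo ν x + f x) := by
  filter_upwards [hG.ae_tendsto_letterInfo hσ,
    hσ.quasiMeasurePreserving.ae hG.ae_exists_abs_gibbsDefect_le] with x hx ⟨B, hB⟩
  have hlim := hx.add_const (f x)
  have hlow : IsBoundedUnder (· ≥ ·) atTop fun n => gibbsDefect ν f n (shiftMap b x) :=
    isBoundedUnder_of ⟨-B, fun n => (abs_le.1 (hB n)).1⟩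
  have hup : IsBoundedUnder (· ≤ ·) atTop fun n => gibbsDefect ν f n (shiftMap b x) :=
    isBoundedUnder_of ⟨B, fun n => (abs_le.1 (hB n)).2⟩
  have hadd := limsup_add_le hlow hup hlim.isCoboundedUnder_le hlim.isBoundedUnder_le
  rw [hlim.limsup_eq] at hadd
  rw [limsupGibbsDefect, ← limsup_nat_add _ 1]
  simp only [gibbsDefect_succ]
  exact hadd

end GibbsDefect

section EqualityCase

variable {b : ℕ} {Ω : Type*} [MeasurableSpace Ω] {P : Measure Ω} {X : List (Fin b) → Ω → ℝ}
  {X₀ : Ω → ℝ} {ν : Measure (SymbSpace b)} {f : SymbSpace b → ℝ} {hν : ℝ}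

/-- The shift of a point together with the weights met along its spine. -/
def spineShift (b : ℕ) : SymbSpace b × (ℕ → ℝ) → SymbSpace b × (ℕ → ℝ) :=
  Prod.map (shiftMap b) seqShift

/-- The increment along the spine of the logarithm of the weights, renormalised by `f`. -/
def spineStep (f : SymbSpace b → ℝ) (q : SymbSpace b × (ℕ → ℝ)) : ℝ :=
  Real.log (q.2 0) + f q.1

lemma measurable_spineShift : Measurable (spineShift b) :=
  measurable_shiftMap.prodMap measurable_seqShift

lemma measurable_spineStep (hf : Measurable f) : Measurable (spineStep f) :=
  (Real.measurable_log.comp ((measurable_pi_apply 0).comp measurable_snd)).add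
    (hf.comp measurable_fst)

lemma birkhoffSum_spineStep (n : ℕ) (q : SymbSpace b × (ℕ → ℝ)) :
    birkhoffSum (spineShift b) (spineStep f) n q =
      ∑ k ∈ Finset.range n, Real.log (q.2 k) + birkhoffSum (shiftMap b) f n q.1 := by
  induction n generalizing q with
  | zero => simp
  | succ n ih =>
    rw [birkhoffSum_succ', birkhoffSum_succ', Finset.sum_range_succ', ih]
    simp only [spineStep, spineShift, Prod.map_apply', seqShift]
    ring

variable [IsProbabilityMeasure ν]

namespace CascadeM1

lemma ae_bddAbove_birkhoffSum_spineStep (h : CascadeM1 P X X₀) (hG : PropertyG ν f)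
    (hUI : UniformIntegrable (cascadeZ X ν) 1 P) : ∀ᵐ q ∂peyriere P X₀ ν,
      BddAbove (range fun n => birkhoffSum (spineShift b) (spineStep f) n q) := by
  have := h.isProbabilityMeasure_sizeBias
  filter_upwards [h.ae_exists_sum_log_le_of_uniformIntegrable hUI,
    Measure.quasiMeasurePreserving_fst.ae hG.ae_exists_abs_gibbsDefect_le] with q ⟨K, hK⟩ ⟨B, hB⟩
  refine ⟨B + K, ?_⟩
  rintro _ ⟨n, rfl⟩
  have hdefect := (abs_le.1 (hB n)).2
  rw [gibbsDefect] at hdefect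
  simp only [birkhoffSum_spineStep]
  linarith [hK n]

lemma measurePreserving_peyriere_eval_zero (h : CascadeM1 P X X₀) :
    MeasurePreserving (fun q : SymbSpace b × (ℕ → ℝ) => q.2 0) (peyriere P X₀ ν)
      (sizeBias (P.map X₀)) :=
  have := h.isProbabilityMeasure_sizeBias
  (measurePreserving_eval_infinitePi (fun _ : ℕ => sizeBias (P.map X₀)) 0).comp
    measurePreserving_snd

lemma integral_log_sizeBias_eq (h : CascadeM1 P X X₀)
    (hent : Tendsto (entropySeq ν) atTop (nhds hν)) (heq : entropyX P X₀ = ENNReal.ofReal hν) :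
    ∫ t, Real.log t ∂sizeBias (P.map X₀) = hν := by
  have htop : entropyX P X₀ ≠ ∞ := heq ▸ ENNReal.ofReal_ne_top
  rw [h.entropyX_eq_ofReal_integral_log htop] at heq
  exact (ENNReal.ofReal_eq_ofReal_iff (h.integral_log_sizeBias_nonneg
    (h.integrable_log_of_entropyX_ne_top htop)) (entropy_nonneg hent)).1 heq

/- With `M` the supremum of the renormalised walk, `M - limsupGibbsDefect` dominates the step
`log ξ₀ - limitLetterInfo`, whose mean is nonnegative: both inequalities are equalities, so that `M`
solves the random cohomological equation. -/
lemma exists_coboundary_of_uniformIntegrable (h : CascadeM1 P X X₀)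
    (hσ : MeasurePreserving (shiftMap b) ν ν) (hG : PropertyG ν f)
    (hent : Tendsto (entropySeq ν) atTop (nhds hν)) (heq : entropyX P X₀ = ENNReal.ofReal hν)
    (hUI : UniformIntegrable (cascadeZ X ν) 1 P) :
    ∃ M : SymbSpace b × (ℕ → ℝ) → ℝ, Measurable M ∧
      ∀ᵐ q ∂peyriere P X₀ ν, M q = spineStep f q + M (spineShift b q) := by
  have := h.isProbabilityMeasure_peyriere ν
  have := h.isProbabilityMeasure_sizeBias
  have hT : MeasurePreserving (spineShift b) (peyriere P X₀ ν) (peyriere P X₀ ν) :=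
    hσ.prod (measurePreserving_seqShift _)
  have hfst : MeasurePreserving Prod.fst (peyriere P X₀ ν) ν := measurePreserving_fst
  have hξ := h.measurePreserving_peyriere_eval_zero (ν := ν)
  let M (q : SymbSpace b × (ℕ → ℝ)) : ℝ := ⨆ n, birkhoffSum (spineShift b) (spineStep f) n q
  have hM : Measurable M := .iSup <|
    measurable_birkhoffSum measurable_spineShift (measurable_spineStep hG.1)
  have hM_le : ∀ᵐ q ∂peyriere P X₀ ν, spineStep f q + M (spineShift b q) ≤ M q := by
    filter_upwards [h.ae_bddAbove_birkhoffSum_spineStep hG hUI] with q hq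
    exact add_iSup_birkhoffSum_le hq
  have hdefect := hfst.quasiMeasurePreserving.ae (hG.ae_limsupGibbsDefect_le hσ)
  have hlog : Integrable (fun q => Real.log (q.2 0)) (peyriere P X₀ ν) :=
    hξ.integrable_comp_of_integrable <|
      h.integrable_log_of_entropyX_ne_top (heq ▸ ENNReal.ofReal_ne_top)
  have hinfo : Integrable (fun q => limitLetterInfo ν q.1) (peyriere P X₀ ν) :=
    hfst.integrable_comp_of_integrable (hG.integrable_limitLetterInfo hσ hent)
  have hmean : 0 ≤ ∫ q, Real.log (q.2 0) - limitLetterInfo ν q.1 ∂peyriere P X₀ ν := by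
    rw [integral_sub hlog hinfo, integral_comp_of_measurePreserving hξ Real.measurable_log,
      integral_comp_of_measurePreserving hfst (measurable_limitLetterInfo ν),
      h.integral_log_sizeBias_eq hent heq, sub_nonneg]
    exact hG.integral_limitLetterInfo_le hσ hent
  have hcob := ae_eq_coboundary_of_le hT (N := fun q => M q - limsupGibbsDefect ν f q.1)
    (hM.sub ((measurable_limsupGibbsDefect hG.1).comp measurable_fst)) (hlog.sub hinfo) hmean ?_
  · refine ⟨M, hM, ?_⟩
    filter_upwards [hM_le, hdefect, hcob] with q hq hqdefect hqcob
    simp only [spineStep, spineShift, Prod.map_apply', Pi.sub_apply]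
      at hq hqcob ⊢
    linarith
  · filter_upwards [hM_le, hdefect] with q hq hqdefect
    simp only [spineStep, spineShift, Prod.map_apply', Pi.sub_apply] at hq ⊢
    linarith

theorem ae_sizeBias_eq_exp_of_uniformIntegrable (h : CascadeM1 P X X₀)
    (hσ : MeasurePreserving (shiftMap b) ν ν) (hG : PropertyG ν f)
    (hent : Tendsto (entropySeq ν) atTop (nhds hν)) (heq : entropyX P X₀ = ENNReal.ofReal hν)
    (hUI : UniformIntegrable (cascadeZ X ν) 1 P) :
    ∀ᵐ t ∂sizeBias (P.map X₀), t = Real.exp hν := by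
  have := h.isProbabilityMeasure_sizeBias
  obtain ⟨M, hM, hcob⟩ := h.exists_coboundary_of_uniformIntegrable hσ hG hent heq hUI
  obtain ⟨c, hc⟩ := exists_ae_eq_const_of_random_coboundary hσ Real.measurable_log hM (f := f) <| by
    filter_upwards [hcob] with q hq
    rwa [← add_assoc]
  have hcν : c = hν := by
    rw [← h.integral_log_sizeBias_eq hent heq, integral_congr_ae hc]
    simp
  filter_upwards [hc, ae_sizeBias_pos _] with t ht hpos
  rw [← hcν, ← ht, Real.exp_log hpos]

end CascadeM1

end EqualityCase

section TwoValuedWeights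

variable {b : ℕ} {Ω : Type*} [MeasurableSpace Ω] {P : Measure Ω} {X : List (Fin b) → Ω → ℝ}
  {X₀ : Ω → ℝ} {ν : Measure (SymbSpace b)} {f : SymbSpace b → ℝ} {hν : ℝ}

namespace CascadeM1

lemma ae_eq_zero_or_eq_of_ae_sizeBias_eq (h : CascadeM1 P X X₀) {c : ℝ}
    (hc : ∀ᵐ t ∂sizeBias (P.map X₀), t = c) : ∀ᵐ ω ∂P, X₀ ω = 0 ∨ X₀ ω = c := by
  rw [sizeBias, ae_withDensity_iff ENNReal.measurable_ofReal] at hc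
  filter_upwards [ae_of_ae_map h.meas₀.aemeasurable hc] with ω hω
  exact or_iff_not_imp_left.2 fun h0 =>
    hω (ENNReal.ofReal_pos.2 ((h.nonneg₀ ω).lt_of_ne' h0)).ne'

lemma measurableSet_ne_zero (h : CascadeM1 P X X₀) : MeasurableSet {ω | X₀ ω ≠ 0} :=
  h.meas₀ (measurableSet_singleton 0).compl

lemma ofReal_mul_measure_ne_zero (h : CascadeM1 P X X₀) {c : ℝ}
    (hc : ∀ᵐ ω ∂P, X₀ ω = 0 ∨ X₀ ω = c) : ENNReal.ofReal c * P {ω | X₀ ω ≠ 0} = 1 := by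
  rw [← h.lintegral_ofReal₀, ← lintegral_indicator_const h.measurableSet_ne_zero]
  refine lintegral_congr_ae ?_
  filter_upwards [hc] with ω hω
  by_cases h0 : X₀ ω = 0
  · simp [h0]
  · rw [indicator_of_mem (by exact h0), hω.resolve_left h0]

lemma isQalphaCascade (h : CascadeM1 P X X₀) {α : ℝ}
    (hα : ∀ᵐ ω ∂P, X₀ ω = 0 ∨ X₀ ω = Real.exp α) : IsQalphaCascade P X₀ α := by
  have := h.isProbabilityMeasure
  have hne : P {ω | X₀ ω ≠ 0} = ENNReal.ofReal (Real.exp (-α)) := by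
    rw [Real.exp_neg, ENNReal.ofReal_inv_of_pos (Real.exp_pos α)]
    exact ENNReal.eq_inv_of_mul_eq_one_left ((mul_comm _ _).trans
      (h.ofReal_mul_measure_ne_zero hα))
  rw [IsQalphaCascade, ← hne, ← prob_compl_eq_one_sub h.measurableSet_ne_zero]
  refine ⟨measure_congr ?_, by simp [compl_def]⟩
  filter_upwards [hα] with ω hω
  exact propext ⟨fun hω : X₀ ω = Real.exp α => hω.trans_ne (Real.exp_pos α).ne', hω.resolve_left⟩

lemma measure_eq_zero_ne_zero (h : CascadeM1 P X X₀) (hX : 0 < P {ω | X₀ ω ≠ 1}) {c : ℝ}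
    (hc : ∀ᵐ ω ∂P, X₀ ω = 0 ∨ X₀ ω = c) : P {ω | X₀ ω = 0} ≠ 0 := by
  have := h.isProbabilityMeasure
  intro hzero
  have hXc : X₀ =ᵐ[P] fun _ => c := by
    filter_upwards [hc, measure_eq_zero_iff_ae_notMem.1 hzero] with ω hω h0
    exact hω.resolve_left h0
  have hc1 : c = 1 := by
    rw [← h.mean₀, integral_congr_ae hXc]
    simp
  refine hX.ne' (measure_eq_zero_iff_ae_notMem.2 ?_)
  filter_upwards [hXc] with ω hω
  simpa using hω.trans hc1

theorem not_uniformIntegrable_of_frequently_birkhoffSum [IsProbabilityMeasure ν]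
    (h : CascadeM1 P X X₀) (hG : PropertyG ν f)
    (hweight : ∀ᵐ t ∂sizeBias (P.map X₀), t = Real.exp hν)
    (hlim : ∀ᵐ x ∂ν, ∀ M : ℝ, ∃ᶠ n in atTop,
      M ≤ ∑ k ∈ Finset.range n, (f ((shiftMap b)^[k] x) + hν)) :
    ¬ UniformIntegrable (cascadeZ X ν) 1 P := by
  intro hUI
  have := h.isProbabilityMeasure_sizeBias
  have := h.isProbabilityMeasure_peyriere ν
  obtain ⟨q, ⟨B, hB⟩, hq, hξ⟩ := ((h.ae_bddAbove_birkhoffSum_spineStep hG hUI).and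
    ((Measure.quasiMeasurePreserving_fst.ae hlim).and
      (Measure.quasiMeasurePreserving_snd.ae (ae_infinitePi_forall hweight)))).exists
  obtain ⟨n, hn⟩ := (hq (B + 1)).exists
  have hle := hB ⟨n, rfl⟩
  simp only [birkhoffSum_spineStep, hξ, Real.log_exp] at hle
  rw [Finset.sum_add_distrib] at hn
  rw [birkhoffSum] at hle
  linarith

end CascadeM1

end TwoValuedWeights

section Extinction

variable {b : ℕ} {Ω : Type*} {X : List (Fin b) → Ω → ℝ} {n : ℕ} {ω : Ω}

open Classical in
/-- The words of length `n` which survive the percolation carried by the cascade, that is, along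
which no weight vanishes. -/
def survivors (X : List (Fin b) → Ω → ℝ) (n : ℕ) (ω : Ω) : Finset (Fin n → Fin b) :=
  {u | cascadeY X (List.ofFn u) ω ≠ 0}

@[simp]
lemma mem_survivors {u : Fin n → Fin b} :
    u ∈ survivors X n ω ↔ cascadeY X (List.ofFn u) ω ≠ 0 := by
  simp [survivors]

/-- The words of length `n + 1` extending a word of `S`. -/
def children (S : Finset (Fin n → Fin b)) : Finset {w : List (Fin b) // w ≠ []} :=
  (S ×ˢ Finset.univ).image fun p => ⟨List.ofFn p.1 ++ [p.2], by simp⟩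

lemma card_children_le (S : Finset (Fin n → Fin b)) : (children S).card ≤ S.card * b :=
  Finset.card_image_le.trans_eq (by simp)

lemma length_of_mem_children {S : Finset (Fin n → Fin b)} {w : {w : List (Fin b) // w ≠ []}}
    (hw : w ∈ children S) : w.1.length = n + 1 := by
  obtain ⟨p, -, rfl⟩ := Finset.mem_image.1 hw
  simp

lemma cascadeZ_eq_zero_of_survivors_eq_empty (ν : Measure (SymbSpace b))
    (hn : survivors X n ω = ∅) : cascadeZ X ν n ω = 0 := by
  refine Finset.sum_eq_zero fun u _ => mul_eq_zero_of_left ?_ _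
  by_contra hu
  simpa [hn] using mem_survivors.2 hu

lemma survivors_succ_eq_empty (hkill : ∀ w ∈ children (survivors X n ω), X w.1 ω = 0) :
    survivors X (n + 1) ω = ∅ := by
  refine Finset.eq_empty_of_forall_notMem fun v hv => ?_
  rw [mem_survivors, List.ofFn_succ_last, cascadeY_append_singleton, mul_ne_zero_iff] at hv
  exact hv.2 (hkill ⟨_, by simp⟩ (Finset.mem_image.2
    ⟨(fun i => v i.castSucc, v (Fin.last n)),
      Finset.mem_product.2 ⟨mem_survivors.2 hv.1, Finset.mem_univ _⟩, rfl⟩))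

lemma survivors_eq_empty_of_le {m : ℕ} (hn : survivors X n ω = ∅) (hnm : n ≤ m) :
    survivors X m ω = ∅ := by
  induction m, hnm using Nat.le_induction with
  | base => exact hn
  | succ m _ ih => exact survivors_succ_eq_empty (by simp [ih, children])

lemma measurableSet_weightSigma_survivors (X : List (Fin b) → Ω → ℝ) (n : ℕ)
    (A : Set (Finset (Fin n → Fin b))) :
    MeasurableSet[weightSigma X {w | w.1.length ≤ n}] {ω | survivors X n ω ∈ A} := by
  let mΩ : MeasurableSpace Ω := weightSigma X {w | w.1.length ≤ n}
  let : MeasurableSpace (Finset (Fin n → Fin b)) := ⊤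
  refine measurable_to_countable' (f := survivors X n) (fun S => ?_)
    (MeasurableSpace.measurableSet_top (s := A))
  simp only [preimage, mem_singleton_iff, Finset.ext_iff, mem_survivors]
  have hY (u : Fin n → Fin b) : Measurable (cascadeY X (List.ofFn u)) :=
    measurable_weightSigma_cascadeY X (by simp)
  measurability

namespace CascadeM1

variable [MeasurableSpace Ω] {P : Measure Ω} {X₀ : Ω → ℝ}

lemma measurableSet_survivors (h : CascadeM1 P X X₀) (n : ℕ) (A : Set (Finset (Fin n → Fin b))) :
    MeasurableSet {ω | survivors X n ω ∈ A} :=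
  h.weightSigma_le _ _ (measurableSet_weightSigma_survivors X n A)

lemma measure_inter_weightSigma_succ (h : CascadeM1 P X X₀) {s t : Set Ω}
    (hs : MeasurableSet[weightSigma X {w | w.1.length ≤ n}] s)
    (ht : MeasurableSet[weightSigma X {w | w.1.length = n + 1}] t) : P (s ∩ t) = P s * P t := by
  have hdisj : Disjoint {w : {w : List (Fin b) // w ≠ []} | w.1.length ≤ n}
      {w | w.1.length = n + 1} :=
    disjoint_left.2 fun w (hw : w.1.length ≤ n) (hw' : w.1.length = n + 1) => by lia
  exact (Indep_iff _ _ P).1 (h.indep_weightSigma hdisj) s t hs ht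

lemma measure_cascadeY_ne_zero (h : CascadeM1 P X X₀) (w : List (Fin b)) :
    P {ω | cascadeY X w ω ≠ 0} = P {ω | X₀ ω ≠ 0} ^ w.length := by
  have := h.isProbabilityMeasure
  induction w using List.reverseRecOn with
  | nil => simp [cascadeY]
  | append_singleton w a ih =>
    have hne : w ++ [a] ≠ [] := by simp
    have hm : MeasurableSet {t : ℝ | t ≠ 0} := (measurableSet_singleton 0).compl
    have hpast : MeasurableSet[weightSigma X {v | v.1.length ≤ w.length}]
        {ω | cascadeY X w ω ≠ 0} := measurable_weightSigma_cascadeY X le_rfl hm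
    have hnew : MeasurableSet[weightSigma X {v | v.1.length = w.length + 1}]
        {ω | X (w ++ [a]) ω ≠ 0} := measurable_weightSigma (w := ⟨_, hne⟩) (by simp) hm
    simp only [cascadeY_append_singleton, mul_ne_zero_iff, ofPred_and]
    rw [h.measure_inter_weightSigma_succ hpast hnew, ih, List.length_append, pow_add]
    congr 1
    simpa using (h.ident _ hne).measure_mem_eq hm

lemma lintegral_card_survivors (h : CascadeM1 P X X₀) (n : ℕ) :
    ∫⁻ ω, (survivors X n ω).card ∂P = (b * P {ω | X₀ ω ≠ 0}) ^ n := by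
  classical
  have hm (u : Fin n → Fin b) : MeasurableSet {ω | u ∈ survivors X n ω} :=
    h.measurableSet_survivors n {S | u ∈ S}
  have hcard (ω : Ω) : ((survivors X n ω).card : ℝ≥0∞) =
      ∑ u, {ω | u ∈ survivors X n ω}.indicator 1 ω := by
    simp only [indicator_apply, mem_ofPred_eq, Pi.one_apply, Finset.sum_boole,
      Finset.filter_univ_mem]
  simp_rw [hcard]
  rw [lintegral_finsetSum _ fun u _ => measurable_one.indicator (hm u)]
  simp_rw [lintegral_indicator_one (hm _), mem_survivors, h.measure_cascadeY_ne_zero]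
  simp [mul_pow]

lemma measure_survivors_eq_mul_pow_le (h : CascadeM1 P X X₀) (S : Finset (Fin n → Fin b)) :
    P {ω | survivors X n ω = S} * P {ω | X₀ ω = 0} ^ (S.card * b) ≤
      P ({ω | survivors X n ω = S} ∩ {ω | survivors X (n + 1) ω = ∅}) := by
  have := h.isProbabilityMeasure
  set killed : Set Ω := ⋂ w ∈ children S, X w.1 ⁻¹' {0}
  have hkilled : P killed = P {ω | X₀ ω = 0} ^ (children S).card := by
    rw [h.indep.measure_inter_preimage_eq_mul (children S) (sets := fun _ => {0})
      fun _ _ => measurableSet_singleton _]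
    exact Finset.prod_eq_pow_card fun w _ =>
      (h.ident w.1 w.2).measure_mem_eq (measurableSet_singleton 0)
  have hmeas : MeasurableSet[weightSigma X {w | w.1.length = n + 1}] killed :=
    Finset.measurableSet_biInter _ fun w hw =>
      measurable_weightSigma (length_of_mem_children hw) (measurableSet_singleton 0)
  calc P {ω | survivors X n ω = S} * P {ω | X₀ ω = 0} ^ (S.card * b)
      ≤ P {ω | survivors X n ω = S} * P killed := by
        rw [hkilled]
        exact mul_le_mul_right (pow_le_pow_right_of_le_one' prob_le_one (card_children_le S)) _
    _ = P ({ω | survivors X n ω = S} ∩ killed) :=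
        (h.measure_inter_weightSigma_succ (measurableSet_weightSigma_survivors X n {S}) hmeas).symm
    _ ≤ P ({ω | survivors X n ω = S} ∩ {ω | survivors X (n + 1) ω = ∅}) := by
        refine measure_mono fun ω ⟨hS, hω⟩ => ⟨hS, survivors_succ_eq_empty fun w hw => ?_⟩
        exact mem_iInter₂.1 hω w ((show survivors X n ω = S from hS) ▸ hw)

lemma measure_card_survivors_le_mul_pow_le (h : CascadeM1 P X X₀) (n j : ℕ) :
    P {ω | survivors X n ω ≠ ∅ ∧ (survivors X n ω).card ≤ j} * P {ω | X₀ ω = 0} ^ (j * b) ≤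
      P {ω | survivors X n ω ≠ ∅ ∧ survivors X (n + 1) ω = ∅} := by
  classical
  have := h.isProbabilityMeasure
  let T : Finset (Finset (Fin n → Fin b)) := {S | S ≠ ∅ ∧ S.card ≤ j}
  have hm (S : Finset (Fin n → Fin b)) : MeasurableSet (survivors X n ⁻¹' {S}) :=
    h.measurableSet_survivors n {S}
  have hnext : MeasurableSet {ω | survivors X (n + 1) ω = ∅} :=
    h.measurableSet_survivors (n + 1) {∅}
  have hT : {ω | survivors X n ω ≠ ∅ ∧ (survivors X n ω).card ≤ j} = survivors X n ⁻¹' T := by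
    ext ω
    simp [T]
  rw [hT, ← sum_measure_preimage_singleton T fun S _ => hm S, Finset.sum_mul]
  calc ∑ S ∈ T, P (survivors X n ⁻¹' {S}) * P {ω | X₀ ω = 0} ^ (j * b)
      ≤ ∑ S ∈ T, (P.restrict {ω | survivors X (n + 1) ω = ∅}) (survivors X n ⁻¹' {S}) := by
        refine Finset.sum_le_sum fun S hS => ?_
        rw [Measure.restrict_apply (hm S)]
        refine le_trans ?_ (h.measure_survivors_eq_mul_pow_le S)
        refine mul_le_mul_right (pow_le_pow_right_of_le_one' prob_le_one ?_) _
        exact Nat.mul_le_mul_right b (Finset.mem_filter.1 hS).2.2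
    _ = P (survivors X n ⁻¹' T ∩ {ω | survivors X (n + 1) ω = ∅}) := by
        rw [sum_measure_preimage_singleton T fun S _ => hm S, Measure.restrict_apply' hnext]
    _ ≤ P {ω | survivors X n ω ≠ ∅ ∧ survivors X (n + 1) ω = ∅} :=
        measure_mono fun ω ⟨hω, hω'⟩ => ⟨(hT ▸ hω : _ ∧ _).1, hω'⟩

/- A population of bounded size dies out at the next step with a probability bounded below, and it
dies out only once. -/
lemma tendsto_measure_card_survivors_le (h : CascadeM1 P X X₀) (hzero : P {ω | X₀ ω = 0} ≠ 0)
    (j : ℕ) :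
    Tendsto (fun n => P {ω | survivors X n ω ≠ ∅ ∧ (survivors X n ω).card ≤ j}) atTop
      (nhds 0) := by
  have := h.isProbabilityMeasure
  set c := P {ω | X₀ ω = 0} ^ (j * b)
  have hc : c ≠ 0 := pow_ne_zero _ hzero
  let death (n : ℕ) : Set Ω := {ω | survivors X n ω ≠ ∅ ∧ survivors X (n + 1) ω = ∅}
  have hmeas (n : ℕ) : MeasurableSet (death n) :=
    (h.measurableSet_survivors n {∅}ᶜ).inter (h.measurableSet_survivors (n + 1) {∅})
  have hdisj : Pairwise (Function.onFun Disjoint death) :=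
    (pairwise_disjoint_on death).2 fun m n hmn => disjoint_left.2 fun ω hm hn =>
      hn.1 (survivors_eq_empty_of_le hm.2 hmn)
  have hsum : ∑' n, P (death n) ≠ ∞ :=
    ne_top_of_le_ne_top (measure_ne_top P _) (tsum_meas_le_meas_iUnion_of_disjoint P hmeas hdisj)
  have hlim : Tendsto (fun n => P (death n) / c) atTop (nhds 0) := by
    simpa using ENNReal.Tendsto.div_const (ENNReal.tendsto_atTop_zero_of_tsum_ne_top hsum)
      (Or.inr hc)
  refine tendsto_of_tendsto_of_tendsto_of_le_of_le tendsto_const_nhds hlim (fun _ => zero_le)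
    fun n => ?_
  rw [ENNReal.le_div_iff_mul_le (.inl hc) (.inl (by finiteness))]
  exact h.measure_card_survivors_le_mul_pow_le n j

theorem tendsto_measure_survivors_ne_empty (h : CascadeM1 P X X₀)
    (hzero : P {ω | X₀ ω = 0} ≠ 0) (hcrit : b * P {ω | X₀ ω ≠ 0} ≤ 1) :
    Tendsto (fun n => P {ω | survivors X n ω ≠ ∅}) atTop (nhds 0) := by
  have hlarge (n j : ℕ) : P {ω | (j + 1 : ℝ≥0∞) ≤ (survivors X n ω).card} ≤ (j + 1 : ℝ≥0∞)⁻¹ := by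
    have hmeas : Measurable fun ω => ((survivors X n ω).card : ℝ≥0∞) := fun A _ =>
      h.measurableSet_survivors n {S | (S.card : ℝ≥0∞) ∈ A}
    refine (meas_ge_le_lintegral_div hmeas.aemeasurable (by simp) (by finiteness)).trans ?_
    rw [h.lintegral_card_survivors, ← one_div]
    gcongr
    exact pow_le_one' hcrit n
  have hle (n j : ℕ) : P {ω | survivors X n ω ≠ ∅} ≤
      P {ω | survivors X n ω ≠ ∅ ∧ (survivors X n ω).card ≤ j} + (j + 1 : ℝ≥0∞)⁻¹ := by
    refine (measure_mono fun ω hω => ?_).trans ((measure_union_le _ _).trans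
      (add_le_add_right (hlarge n j) _))
    refine (le_or_gt (survivors X n ω).card j).imp (fun hj => ⟨hω, hj⟩) fun hj => ?_
    exact_mod_cast (hj : j + 1 ≤ _)
  refine ENNReal.tendsto_nhds_zero.2 fun ε hε => ?_
  obtain ⟨j, hj⟩ := ENNReal.exists_inv_nat_lt (ENNReal.half_pos hε.ne').ne'
  filter_upwards [ENNReal.tendsto_nhds_zero.1 (h.tendsto_measure_card_survivors_le hzero j) (ε / 2)
    (ENNReal.half_pos hε.ne')] with n hn
  calc P {ω | survivors X n ω ≠ ∅} ≤ ε / 2 + (j + 1 : ℝ≥0∞)⁻¹ := (hle n j).trans (by gcongr)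
    _ ≤ ε / 2 + ε / 2 := by
        gcongr
        exact (ENNReal.inv_le_inv.2 le_self_add).trans hj.le
    _ = ε := ENNReal.add_halves ε

theorem not_uniformIntegrable_of_mul_measure_ne_zero_le_one {ν : Measure (SymbSpace b)}
    [IsProbabilityMeasure ν] (h : CascadeM1 P X X₀) (hzero : P {ω | X₀ ω = 0} ≠ 0)
    (hcrit : b * P {ω | X₀ ω ≠ 0} ≤ 1) : ¬ UniformIntegrable (cascadeZ X ν) 1 P := by
  have := h.isProbabilityMeasure
  intro hUI
  have hprob : TendstoInMeasure P (cascadeZ X ν) atTop 0 := fun ε hε => by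
    refine tendsto_of_tendsto_of_tendsto_of_le_of_le tendsto_const_nhds
      (h.tendsto_measure_survivors_ne_empty hzero hcrit) (fun _ => zero_le) fun n => ?_
    refine measure_mono fun ω (hω : ε ≤ edist (cascadeZ X ν n ω) 0) hempty => hε.not_ge ?_
    simpa [cascadeZ_eq_zero_of_survivors_eq_empty ν hempty] using hω
  have hlim := tendsto_Lp_finite_of_tendstoInMeasure le_rfl ENNReal.one_ne_top
    (fun n => (h.measurable_cascadeZ ν n).aestronglyMeasurable) (MemLp.zero) hUI.2.1 hprob
  have hone (n : ℕ) : eLpNorm (cascadeZ X ν n - 0) 1 P = 1 := by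
    rw [sub_zero, eLpNorm_one_eq_lintegral_enorm, ← measure_univ (μ := ν),
      ← h.lintegral_ofReal_cascadeZ n]
    exact lintegral_congr fun ω => Real.enorm_eq_ofReal (h.cascadeZ_nonneg ν n ω)
  simp only [hone] at hlim
  exact one_ne_zero (tendsto_nhds_unique tendsto_const_nhds hlim)

end CascadeM1

end Extinction

section UniformMeasure

variable {b : ℕ} {ν : Measure (SymbSpace b)} {hν : ℝ}

lemma wordInfo_of_isUniformMeasure (hu : IsUniformMeasure ν) (w : List (Fin b)) :
    wordInfo ν w = w.length * Real.log b := by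
  simp [wordInfo, hu w]

lemma entropy_eq_log_of_isUniformMeasure [IsProbabilityMeasure ν] (hu : IsUniformMeasure ν)
    (hent : Tendsto (entropySeq ν) atTop (nhds hν)) : hν = Real.log b := by
  refine tendsto_nhds_unique (tendsto_integral_wordInfo_div hent)
    (tendsto_const_nhds.congr' ?_)
  filter_upwards [eventually_ne_atTop 0] with n hn
  simp [wordInfo_of_isUniformMeasure hu, length_wordPrefix, hn]

end UniformMeasure

/-- **Corollary (characterisation of `Q`-regularity for Gibbs-like ergodic measures).**
Suppose `ℙ(X ≠ 1) > 0`. Let `ν` be a shift-ergodic probability measure on `Σ`, with entropy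
`h_ν(σ)`, satisfying property (G) with potential `f`; if `Q = Q_{h_ν(σ)}` and
`h_X = h_ν(σ)`, suppose moreover that `ν` satisfies (G̃). Then `ν` is `Q`-regular
(the martingale `(Z_n)` is uniformly integrable) if and only if `h_X < h_ν(σ)`. -/
theorem regular_iff_entropy_lt_gibbs
    {b : ℕ} (hb : 2 ≤ b)
    {Ω : Type*} [MeasurableSpace Ω] (P : Measure Ω) [IsProbabilityMeasure P]
    (X : List (Fin b) → Ω → ℝ) (X₀ : Ω → ℝ)
    (hM1 : CascadeM1 P X X₀)
    (hX1 : 0 < P {ω | X₀ ω ≠ 1})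
    (ν : Measure (SymbSpace b)) [IsProbabilityMeasure ν]
    (hνerg : Ergodic (shiftMap b) ν)
    (f : SymbSpace b → ℝ) (hG : PropertyG ν f)
    (hν : ℝ) (hent : Tendsto (entropySeq ν) atTop (nhds hν))
    (hGt : IsQalphaCascade P X₀ hν ∧ entropyX P X₀ = ENNReal.ofReal hν →
      PropertyGtilde ν f hν) :
    UniformIntegrable (fun n ω => cascadeZ X ν n ω) 1 P ↔
      entropyX P X₀ < ENNReal.ofReal hν := by
  constructor
  · intro hUI
    by_contra! hge
    rcases hge.lt_or_eq with hlt | heq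
    · exact hM1.not_uniformIntegrable_of_lt_entropyX hent hlt hUI
    have hweight := hM1.ae_sizeBias_eq_exp_of_uniformIntegrable hνerg.toMeasurePreserving hG hent
      heq.symm hUI
    have htwo := hM1.ae_eq_zero_or_eq_of_ae_sizeBias_eq hweight
    by_cases hu : IsUniformMeasure ν
    · have hcrit : b * P {ω | X₀ ω ≠ 0} = 1 := by
        rw [← hM1.ofReal_mul_measure_ne_zero htwo, entropy_eq_log_of_isUniformMeasure hu hent,
          Real.exp_log (by positivity), ENNReal.ofReal_natCast]
      exact hM1.not_uniformIntegrable_of_mul_measure_ne_zero_le_one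
        (hM1.measure_eq_zero_ne_zero hX1 htwo) hcrit.le hUI
    · exact hM1.not_uniformIntegrable_of_frequently_birkhoffSum hG hweight
        ((hGt ⟨hM1.isQalphaCascade htwo, heq.symm⟩).2 hu) hUI
  · exact hM1.uniformIntegrable_of_entropyX_lt hνerg hent

end
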